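/- arXiv:2411.17613 — 4 statements merged into one kernel-verified Lean document; each statement's English description precedes it below -/
import Mathlib

section
/- For n ≥ 2 let μ_n be the uniform probability measure on the (finite, nonempty) set of labeled trees on [n], let ℓ(T) be the number of leaves of T, and let E_n and V_n be the mean and variance of ℓ under μ_n. Then the law of the normalized random variable T ↦ (ℓ(T) − E_n)/√V_n under μ_n converges weakly (in distribution), as n → ∞, to the standard Gaussian measure N(0,1) on ℝ. -/
/-!
The number of leaves of a uniform labelled tree is, by Prüfer's code, distributed as the number of
empty boxes when `n - 2` balls are thrown into `n` boxes. The argument makes this precise through a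
generating function and then proves a local limit theorem for it.

*Combinatorics.* Deleting a prescribed set `S` of leaves, and remembering where each was attached,
shows that `(n - |S|) ^ |S| * t (n - |S|)` trees on `n ≥ 3` vertices have all of `S` among their
leaves, `t m` being the number of labelled trees on `m` vertices (`card_trees_leaves`). Expanding
`w ^ ℓ(T) = ∑_{S ⊆ leaves} (w - 1) ^ |S|` gives the generating polynomial of `ℓ` in terms of `t`.
At `w = 0` it vanishes, since every tree has a leaf; comparing with the vanishing `n`-th finite
difference of `x ^ (n - 2)` yields Cayley's formula `t n = n ^ (n - 2)` by induction
(`treeCount_eq`), hence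
`∑_T w ^ ℓ(T) = ∑_k C(n, k) (w - 1) ^ k (n - k) ^ (n - 2)` (`sum_pow_leafCount`).

*Integral representation.* Let `φ(θ, w) = exp (e^{iθ} - 1) + e⁻¹ (w - 1)`, which is
`𝔼 [e^{iθN} w^{1_{N = 0}}]` for `N` Poisson of mean `1`. By Cauchy's formula the polynomial above
is, up to a factor independent of `w`, the integral of `e^{-i(n-2)θ} φ(θ, w) ^ n` over `[-π, π]`
(`integral_phi_pow`).

*Limit.* Substitute `w = exp (i s / √n)` and `θ = x / √n`. A second-order expansion gives the
pointwise limit of the integrand (`tendsto_phi_pow`), and `‖φ(θ, w)‖ ≤ exp (-c θ²)` for `‖w‖ = 1`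
(`norm_phi_le`) dominates it, so the integral converges to a Gaussian one. Dividing by the value at
`s = 0` removes the prefactor: the characteristic function of `(ℓ - n / e) / √n` at `s` tends to
`exp (-σ² s² / 2)`, where `σ² = e⁻¹ - 2 e⁻²` (`tendsto_char`), locally uniformly in `s` in the sense
that `s` may vary with `n`.

*Normalization.* The first two moments are explicit, and yield `E_n - n / e = o(√n)` and
`V_n / n → σ² > 0`. This replaces `n / e` and `√n` by `E_n` and `√V_n`, and Lévy's continuity
theorem concludes.
-/

open MeasureTheory

/-- The number of leaves (vertices of degree 1) of a graph on `Fin n`. -/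
noncomputable def leafCount {n : ℕ} (T : SimpleGraph (Fin n)) : ℕ :=
  Nat.card {v : Fin n // Nat.card (T.neighborSet v) = 1}

instance {n : ℕ} : MeasurableSpace {T : SimpleGraph (Fin n) // T.IsTree} := ⊤

/-- The uniform probability measure on the (finite, nonempty for `n ≥ 2`) set of
labeled trees on `[n]`. -/
noncomputable def treeUniform (n : ℕ) :
    Measure {T : SimpleGraph (Fin n) // T.IsTree} :=
  ((Nat.card {T : SimpleGraph (Fin n) // T.IsTree} : ENNReal))⁻¹ • Measure.count

/-- The mean of the number of leaves under the uniform measure. -/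
noncomputable def En (n : ℕ) : ℝ :=
  ∫ T, (leafCount T.val : ℝ) ∂(treeUniform n)

/-- The variance of the number of leaves under the uniform measure. -/
noncomputable def Vn (n : ℕ) : ℝ :=
  ∫ T, ((leafCount T.val : ℝ) - En n) ^ 2 ∂(treeUniform n)

namespace LeavesCLT

/-! ### Attaching leaves to a tree -/

/-- `v` has exactly one neighbour in `T`. -/
def IsLeaf {V : Type*} (T : SimpleGraph V) (v : V) : Prop := Nat.card (T.neighborSet v) = 1

lemma isLeaf_iff {V : Type*} {T : SimpleGraph V} {v : V} :
    IsLeaf T v ↔ ∃! w, T.Adj v w := by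
  unfold IsLeaf
  rw [Nat.card_eq_one_iff_unique, ← unique_subtype_iff_existsUnique,
    unique_iff_subsingleton_and_nonempty]
  rfl

/-- In a connected graph with two adjacent leaves there is no third vertex. -/
lemma eq_or_eq_of_adj_leaves {V : Type*} {T : SimpleGraph V} (hT : T.Connected) {u v : V}
    (huv : T.Adj u v) (hu : IsLeaf T u) (hv : IsLeaf T v) (x : V) : x = u ∨ x = v := by
  have h := (SimpleGraph.reachable_iff_reflTransGen u x).1 (hT.preconnected u x)
  induction h with
  | refl => exact Or.inl rfl
  | tail _ hbc ih =>
    rcases ih with rfl | rfl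
    · exact Or.inr ((isLeaf_iff.1 hu).unique hbc huv)
    · exact Or.inl ((isLeaf_iff.1 hv).unique hbc huv.symm)

/-- The graph on `A ⊕ B` obtained from `T` by joining each new vertex `b : B` to `g b` only. -/
def attach {A B : Type*} (T : SimpleGraph A) (g : B → A) : SimpleGraph (A ⊕ B) where
  Adj
    | .inl a, .inl a' => T.Adj a a'
    | .inl a, .inr b => g b = a
    | .inr b, .inl a => g b = a
    | .inr _, .inr _ => False
  symm := ⟨by rintro (a | b) (a' | b') h <;> first | exact h.symm | exact h⟩
  loopless := ⟨by rintro (a | b) h <;> [exact T.loopless.irrefl a h; exact h]⟩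

section
variable {A B : Type*} (T : SimpleGraph A) (g : B → A)

@[simp] lemma attach_inl_inl (a a' : A) : (attach T g).Adj (.inl a) (.inl a') ↔ T.Adj a a' := Iff.rfl
@[simp] lemma attach_inl_inr (a : A) (b : B) : (attach T g).Adj (.inl a) (.inr b) ↔ g b = a := Iff.rfl
@[simp] lemma attach_inr_inl (a : A) (b : B) : (attach T g).Adj (.inr b) (.inl a) ↔ g b = a := Iff.rfl
@[simp] lemma attach_inr_inr (b b' : B) : (attach T g).Adj (.inr b) (.inr b') ↔ False := Iff.rfl

lemma attach_isLeaf (b : B) : IsLeaf (attach T g) (.inr b) := by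
  rw [isLeaf_iff]
  refine ⟨.inl (g b), by simp, ?_⟩
  rintro (a | b') h
  · simp at h; simp [h]
  · simp at h

lemma attach_connected (hT : T.Connected) : (attach T g).Connected := by
  obtain ⟨a₀⟩ := hT.nonempty
  have hl : ∀ a, (attach T g).Reachable (.inl a₀) (.inl a) := fun a =>
    (hT.preconnected a₀ a).map ⟨Sum.inl, fun h => h⟩
  rw [SimpleGraph.connected_iff_exists_forall_reachable]
  refine ⟨.inl a₀, ?_⟩
  rintro (a | b)
  · exact hl a
  · exact (hl (g b)).trans (SimpleGraph.Adj.reachable (by simp))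

/-- Every edge of `attach T g` is either an edge of `T` or one of the pendant edges. -/
lemma attach_card_edgeSet [Finite A] [Finite B] :
    Nat.card (attach T g).edgeSet = Nat.card T.edgeSet + Nat.card B := by
  let f : T.edgeSet ⊕ B → Sym2 (A ⊕ B) :=
    Sum.elim (fun e => Sym2.map Sum.inl e.1) (fun b => s(.inl (g b), .inr b))
  have hf : Function.Injective f := by
    rintro (e | b) (e' | b') h
    · have := Sym2.map.injective Sum.inl_injective h
      exact congrArg _ (Subtype.ext this)
    · exfalso
      have : Sum.inr b' ∈ Sym2.map (Sum.inl (β := B)) e.1 := by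
        simp only [f, Sum.elim_inl, Sum.elim_inr] at h
        rw [h]; simp
      simp [Sym2.mem_map] at this
    · exfalso
      have : Sum.inr b ∈ Sym2.map (Sum.inl (β := B)) e'.1 := by
        simp only [f, Sum.elim_inl, Sum.elim_inr] at h
        rw [← h]; simp
      simp [Sym2.mem_map] at this
    · simp only [f, Sum.elim_inr, Sym2.eq_iff, Sum.inl.injEq, Sum.inr.injEq] at h
      grind
  have hr : (attach T g).edgeSet = Set.range f := by
    ext e
    induction e using Sym2.ind with
    | _ x y =>
      simp only [SimpleGraph.mem_edgeSet, Set.mem_range, Sum.exists, f, Sum.elim_inl, Sum.elim_inr,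
        Subtype.exists]
      constructor
      · rcases x with a | b <;> rcases y with a' | b' <;> intro h
        · exact Or.inl ⟨s(a, a'), h, rfl⟩
        · rw [attach_inl_inr] at h
          exact Or.inr ⟨b', by rw [h]⟩
        · rw [attach_inr_inl] at h
          exact Or.inr ⟨b, by rw [h, Sym2.eq_swap]⟩
        · exact h.elim
      · rintro (⟨e, he, h⟩ | ⟨b, h⟩)
        · induction e using Sym2.ind with
          | _ p q =>
            have he' : (attach T g).Adj (.inl p) (.inl q) := he
            rw [← SimpleGraph.mem_edgeSet] at he' ⊢
            rw [← h]; exact he'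
        · have he' : (attach T g).Adj (.inl (g b)) (.inr b) := by simp
          rw [← SimpleGraph.mem_edgeSet] at he' ⊢
          rw [← h]; exact he'
  rw [hr, Nat.card_range_of_injective hf, Nat.card_sum]

lemma attach_isTree [Finite A] [Finite B] (hT : T.IsTree) : (attach T g).IsTree := by
  rw [SimpleGraph.isTree_iff_connected_and_card] at hT ⊢
  refine ⟨attach_connected T g hT.1, ?_⟩
  rw [attach_card_edgeSet, Nat.card_sum]
  omega
end

/-- Deleting a set of leaves, but not all vertices, from a tree leaves a tree. -/
lemma comap_inl_isTree {A B : Type*} [Nonempty A] {T : SimpleGraph (A ⊕ B)} (hT : T.IsTree)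
    (h : ∀ b, IsLeaf T (.inr b)) : (T.comap Sum.inl : SimpleGraph A).IsTree := by
  have h1 : (T.induce (Set.range (Sum.inl : A → A ⊕ B))).Preconnected := by
    refine hT.connected.preconnected.induce_of_degree_eq_one ?_
    rintro (a | b) hv
    · simp at hv
    · intro x hx y hy
      exact (isLeaf_iff.1 (h b)).unique hx hy
  let e : (T.comap Sum.inl : SimpleGraph A) ≃g T.induce (Set.range (Sum.inl : A → A ⊕ B)) :=
    ⟨Equiv.ofInjective _ Sum.inl_injective, by intros; rfl⟩
  refine ⟨?_, hT.isAcyclic.comap ⟨Sum.inl, fun h => h⟩ Sum.inl_injective⟩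
  have : (T.comap Sum.inl : SimpleGraph A).Preconnected := e.preconnected_iff.2 h1
  exact ⟨this⟩

/-- If all of `B` are leaves and `A` is nonempty, no two vertices of `B` are adjacent, so the
neighbour of a vertex of `B` lies in `A`. -/
lemma exists_adj_inl {A B : Type*} [Nonempty A] {T : SimpleGraph (A ⊕ B)} (hT : T.IsTree)
    (h : ∀ b, IsLeaf T (.inr b)) (b : B) : ∃ a, T.Adj (.inr b) (.inl a) := by
  obtain ⟨x, hx, -⟩ := isLeaf_iff.1 (h b)
  rcases x with a | b'
  · exact ⟨a, hx⟩
  · obtain ⟨a⟩ := ‹Nonempty A›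
    simpa using eq_or_eq_of_adj_leaves hT.connected hx (h b) (h b') (.inl a)

/-- Trees on `A ⊕ B` in which all of `B` are leaves correspond, through `attach`, to a tree on `A`
together with a map `B → A` recording where each leaf is attached. -/
lemma card_trees_leaves_sum (A B : Type*) [Finite A] [Finite B] [Nonempty A] :
    Nat.card {T : SimpleGraph (A ⊕ B) // T.IsTree ∧ ∀ b, IsLeaf T (.inr b)} =
      Nat.card A ^ Nat.card B * Nat.card {T : SimpleGraph A // T.IsTree} := by
  let F : {T : SimpleGraph A // T.IsTree} × (B → A) →
      {T : SimpleGraph (A ⊕ B) // T.IsTree ∧ ∀ b, IsLeaf T (.inr b)} :=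
    fun p => ⟨attach p.1.1 p.2, attach_isTree _ _ p.1.2, attach_isLeaf _ _⟩
  have hF : Function.Bijective F := by
    constructor
    · rintro ⟨⟨T, hT⟩, g⟩ ⟨⟨T', hT'⟩, g'⟩ h
      have h' : attach T g = attach T' g' := congrArg Subtype.val h
      have h1 : T = T' := by
        ext a a'
        rw [← attach_inl_inl T g, h', attach_inl_inl]
      have h2 : g = g' := by
        ext b
        have : (attach T g).Adj (.inr b) (.inl (g b)) := by simp
        rw [h'] at this
        simpa [eq_comm] using this
      subst h1 h2
      rfl
    · rintro ⟨T, hT, h⟩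
      choose g hg using exists_adj_inl hT h
      refine ⟨⟨⟨_, comap_inl_isTree hT h⟩, g⟩, Subtype.ext ?_⟩
      have key : ∀ b x, T.Adj (.inr b) x ↔ x = .inl (g b) := fun b x =>
        ⟨fun hx => (isLeaf_iff.1 (h b)).unique hx (hg b), fun hx => hx ▸ hg b⟩
      ext x y
      rcases x with a | b <;> rcases y with a' | b'
      · rfl
      · change (attach _ g).Adj _ _ ↔ _
        rw [attach_inl_inr, T.adj_comm, key]; simp [eq_comm]
      · change (attach _ g).Adj _ _ ↔ _
        rw [attach_inr_inl, key]; simp [eq_comm]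
      · change (attach _ g).Adj _ _ ↔ _
        rw [attach_inr_inr, key]; simp
  rw [← Nat.card_eq_of_bijective F hF, Nat.card_prod, Nat.card_fun, mul_comm]

lemma Iso.isLeaf_iff {V W : Type*} {G : SimpleGraph V} {H : SimpleGraph W} (e : G ≃g H) (v : V) :
    IsLeaf H (e v) ↔ IsLeaf G v := by
  unfold IsLeaf
  rw [Nat.card_congr (e.mapNeighborSet v)]

/-- The number of trees with prescribed leaves is invariant under relabelling the vertices. -/
lemma card_trees_congr {V W : Type*} (e : V ≃ W) (P : Set V) (Q : Set W)
    (h : ∀ v, e v ∈ Q ↔ v ∈ P) :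
    Nat.card {T : SimpleGraph V // T.IsTree ∧ ∀ v ∈ P, IsLeaf T v} =
      Nat.card {T : SimpleGraph W // T.IsTree ∧ ∀ v ∈ Q, IsLeaf T v} := by
  let E : SimpleGraph V ≃ SimpleGraph W :=
    ⟨fun T => T.comap e.symm, fun T => T.comap e, fun T => by ext; simp, fun T => by ext; simp⟩
  refine Nat.card_congr (Equiv.subtypeEquiv E fun T => ?_)
  let i : T ≃g E T := ⟨e, by simp [E]⟩
  rw [i.isTree_iff, e.surjective.forall]
  refine and_congr_right fun _ => forall_congr' fun v => ?_
  rw [h v]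
  exact imp_congr_right fun _ => (Iso.isLeaf_iff i v).symm

/-! ### Counting trees by their leaves, and Cayley's formula -/

/-- The number of labelled trees on `n` vertices. -/
noncomputable def treeCount (n : ℕ) : ℕ := Nat.card {T : SimpleGraph (Fin n) // T.IsTree}

lemma card_trees_eq_treeCount (V : Type*) [Finite V] :
    Nat.card {T : SimpleGraph V // T.IsTree} = treeCount (Nat.card V) := by
  have := card_trees_congr (Finite.equivFin V) ∅ ∅ (by simp)
  simpa [treeCount] using this

lemma treeCount_zero : treeCount 0 = 0 := by
  have : IsEmpty {T : SimpleGraph (Fin 0) // T.IsTree} :=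
    ⟨fun T => by obtain ⟨x⟩ := T.2.connected.nonempty; exact x.elim0⟩
  exact Nat.card_of_isEmpty

lemma treeCount_one : treeCount 1 = 1 := by
  rw [treeCount, Nat.card_eq_one_iff_unique]
  refine ⟨⟨fun S T => Subtype.ext ?_⟩, ⟨⊥, SimpleGraph.IsTree.of_subsingleton⟩⟩
  exact Subsingleton.elim _ _

lemma treeCount_two : treeCount 2 = 1 := by
  rw [treeCount, Nat.card_eq_one_iff_unique]
  have key : ∀ T : SimpleGraph (Fin 2), T.IsTree → T = ⊤ := by
    intro T hT
    have h : T.Adj 0 1 := by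
      obtain ⟨w, hw⟩ := hT.connected.preconnected.exists_adj_of_nontrivial 0
      fin_cases w
      · exact (T.loopless.irrefl _ hw).elim
      · exact hw
    ext x y
    fin_cases x <;> fin_cases y <;> simp [h, h.symm]
  refine ⟨⟨fun S T => Subtype.ext ((key _ S.2).trans (key _ T.2).symm)⟩,
    ⟨⊤, SimpleGraph.connected_top, SimpleGraph.IsAcyclic.of_card_le_two (by simp)⟩⟩

/-- The number of trees with all of `S` among their leaves. The case `S = univ` is separate:
both sides are `0`, which fails for `n = 2`, whence the assumption `3 ≤ n`. -/
lemma card_trees_leaves {n : ℕ} (hn : 3 ≤ n) (S : Finset (Fin n)) :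
    Nat.card {T : SimpleGraph (Fin n) // T.IsTree ∧ ∀ v ∈ S, IsLeaf T v} =
      (n - S.card) ^ S.card * treeCount (n - S.card) := by
  by_cases hS : S = Finset.univ
  · subst hS
    have : IsEmpty {T : SimpleGraph (Fin n) // T.IsTree ∧
        ∀ v ∈ (Finset.univ : Finset (Fin n)), IsLeaf T v} := by
      refine ⟨fun ⟨T, hT, h⟩ => ?_⟩
      let u : Fin n := ⟨0, by omega⟩
      obtain ⟨v, hv, -⟩ := isLeaf_iff.1 (h u (Finset.mem_univ _))
      have key := eq_or_eq_of_adj_leaves hT.connected hv (h _ (Finset.mem_univ _))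
        (h _ (Finset.mem_univ _))
      have : (Finset.univ : Finset (Fin n)) ⊆ {u, v} := fun x _ => by
        simpa using key x
      have := (Finset.card_le_card this).trans Finset.card_le_two
      simp at this
      omega
    rw [Nat.card_of_isEmpty]
    simp [treeCount_zero]
  · obtain ⟨a, ha⟩ : ∃ a, a ∉ S := by
      by_contra! h
      exact hS (Finset.eq_univ_iff_forall.2 h)
    have : Nonempty {v // v ∉ S} := ⟨⟨a, ha⟩⟩
    let e : Fin n ≃ {v // v ∉ S} ⊕ {v // v ∈ S} :=
      ((Equiv.sumComm _ _).trans (Equiv.sumCompl (· ∈ S))).symm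
    have h1 := card_trees_congr e (↑S) (Set.range Sum.inr) (by
      rw [e.symm.surjective.forall]
      rintro (⟨v, hv⟩ | ⟨v, hv⟩) <;> simp [e, hv])
    have h2 := card_trees_leaves_sum {v // v ∉ S} {v // v ∈ S}
    simp only [Set.forall_mem_range] at h1
    have hA : Nat.card {v // v ∉ S} = n - S.card := by
      simp [Nat.card_eq_fintype_card, Fintype.card_subtype_compl]
    rw [card_trees_eq_treeCount, hA] at h2
    simpa using h1.trans h2

/-- The finite type of labelled trees on `Fin n`. -/
abbrev LTree (n : ℕ) := {T : SimpleGraph (Fin n) // T.IsTree}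

open Classical in
/-- The set of leaves of `T` as a finset; its cardinality is `leafCount T`. -/
noncomputable def leafSet {n : ℕ} (T : SimpleGraph (Fin n)) : Finset (Fin n) :=
  Finset.univ.filter (IsLeaf T)

lemma card_leafSet {n : ℕ} (T : SimpleGraph (Fin n)) : (leafSet T).card = leafCount T := by
  classical
  unfold leafSet leafCount
  rw [Nat.card_eq_fintype_card, Fintype.card_subtype]
  congr 1
  ext v
  simp [IsLeaf]

lemma mem_leafSet {n : ℕ} {T : SimpleGraph (Fin n)} {v : Fin n} : v ∈ leafSet T ↔ IsLeaf T v := by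
  simp [leafSet]

noncomputable instance (n : ℕ) : Fintype (LTree n) := Fintype.ofFinite _

lemma card_filter_leaves {n : ℕ} (hn : 3 ≤ n) (S : Finset (Fin n)) :
    (Finset.univ.filter fun T : LTree n => S ⊆ leafSet T.1).card =
      (n - S.card) ^ S.card * treeCount (n - S.card) := by
  classical
  rw [← card_trees_leaves hn, ← Fintype.card_subtype, ← Nat.card_eq_fintype_card]
  refine Nat.card_congr ((Equiv.subtypeSubtypeEquivSubtypeInter _ fun T => S ⊆ leafSet T).trans
    (Equiv.subtypeEquivRight fun T => ?_))
  simp [Finset.subset_iff, mem_leafSet]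

/-- The generating polynomial of the number of leaves, in terms of `treeCount`: expand
`w ^ ℓ(T) = ∑_{S ⊆ leaves} (w - 1) ^ |S|` and exchange the two summations. -/
lemma sum_pow_leafCount_aux {R : Type*} [CommRing R] {n : ℕ} (hn : 3 ≤ n) (w : R) :
    ∑ T : LTree n, w ^ leafCount T.1 =
      ∑ k ∈ Finset.range (n + 1), (n.choose k : R) *
        ((w - 1) ^ k * (((n - k) ^ k * treeCount (n - k) : ℕ) : R)) := by
  classical
  have h1 : ∀ T : LTree n, w ^ leafCount T.1 =
      ∑ S : Finset (Fin n), if S ⊆ leafSet T.1 then (w - 1) ^ S.card else 0 := by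
    intro T
    have := Finset.sum_pow_mul_eq_add_pow (w - 1) 1 (leafSet T.1)
    simp only [one_pow, mul_one, sub_add_cancel, card_leafSet] at this
    rw [← this, ← Finset.sum_filter]
    congr 1
    ext S; simp
  simp_rw [h1]
  rw [Finset.sum_comm]
  have h2 : ∀ S : Finset (Fin n),
      (∑ T : LTree n, if S ⊆ leafSet T.1 then (w - 1) ^ S.card else 0) =
        (w - 1) ^ S.card * (((n - S.card) ^ S.card * treeCount (n - S.card) : ℕ) : R) := by
    intro S
    rw [← Finset.sum_filter, Finset.sum_const, card_filter_leaves hn, nsmul_eq_mul, mul_comm]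
  simp_rw [h2]
  have := Finset.sum_powerset_apply_card (fun k => (w - 1) ^ k *
    (((n - k) ^ k * treeCount (n - k) : ℕ) : R)) (x := (Finset.univ : Finset (Fin n)))
  simpa using this

lemma leafCount_pos {n : ℕ} (hn : 2 ≤ n) (T : LTree n) : 0 < leafCount T.1 := by
  classical
  have : Nontrivial (Fin n) := Fin.nontrivial_iff_two_le.2 hn
  obtain ⟨v, hv⟩ := T.2.exists_vert_degree_one_of_nontrivial
  rw [← card_leafSet, Finset.card_pos]
  refine ⟨v, mem_leafSet.2 ?_⟩
  rw [isLeaf_iff, ← SimpleGraph.degree_eq_one_iff_existsUnique_adj, hv]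

/-- The `n`-th finite difference of `x ^ (n - 2)` vanishes. -/
lemma alternating_sum (n : ℕ) (hn : 3 ≤ n) :
    ∑ k ∈ Finset.range (n + 1), (n.choose k : ℤ) * ((-1) ^ k * (((n - k) ^ (n - 2) : ℕ) : ℤ)) = 0 := by
  have h := congrFun (fwdDiff_iter_pow_eq_zero_of_lt (R := ℤ) (show n - 2 < n by omega)) 0
  rw [fwdDiff_iter_eq_sum_shift] at h
  rw [← Finset.sum_range_reflect]
  simp only [Pi.zero_apply, zero_add, smul_eq_mul] at h
  rw [← h]
  refine Finset.sum_congr rfl fun k hk => ?_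
  have hk' : k ≤ n := by simpa [Nat.lt_succ_iff] using hk
  rw [show n + 1 - 1 - k = n - k by omega, Nat.choose_symm hk', show n - (n - k) = k by omega]
  push_cast
  ring

lemma pow_mul_treeCount_aux {n k : ℕ} (hn : 3 ≤ n) (hk : k ≤ n)
    (h : 1 ≤ n - k → treeCount (n - k) = (n - k) ^ (n - k - 2)) :
    (n - k) ^ k * treeCount (n - k) = (n - k) ^ (n - 2) := by
  rcases (by omega : n - k = 0 ∨ n - k = 1 ∨ 2 ≤ n - k) with h0 | h1 | h2
  · rw [h0, treeCount_zero, zero_pow (by omega : n - 2 ≠ 0), mul_zero]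
  · rw [h1, treeCount_one]; simp
  · rw [h (by omega), ← pow_add]
    congr 1
    omega

/-- **Cayley's formula**. The generating polynomial vanishes at `w = 0`; by induction all of its
terms but `k = 0` agree with those of `alternating_sum`, hence so does the remaining one. With
truncated subtraction the formula also holds for `n = 1`. -/
theorem treeCount_eq (n : ℕ) (hn : 1 ≤ n) : treeCount n = n ^ (n - 2) := by
  induction n using Nat.strong_induction_on with
  | _ n ih =>
    rcases (by omega : n = 1 ∨ n = 2 ∨ 3 ≤ n) with rfl | rfl | h3
    · simp [treeCount_one]
    · simp [treeCount_two]
    · have h := sum_pow_leafCount_aux (R := ℤ) h3 0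
      rw [Finset.sum_eq_zero fun T _ => zero_pow (leafCount_pos (by omega) T).ne'] at h
      have h' := alternating_sum n h3
      rw [Finset.sum_range_succ'] at h h'
      have : ∀ k ∈ Finset.range n, (n.choose (k + 1) : ℤ) * ((0 - 1) ^ (k + 1) *
          (((n - (k + 1)) ^ (k + 1) * treeCount (n - (k + 1)) : ℕ) : ℤ)) =
          (n.choose (k + 1) : ℤ) * ((-1) ^ (k + 1) * (((n - (k + 1)) ^ (n - 2) : ℕ) : ℤ)) := by
        intro k hk
        rw [pow_mul_treeCount_aux h3 (by simpa using hk) (ih (n - (k + 1)) (by omega)), zero_sub]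
      rw [Finset.sum_congr rfl this] at h
      simp only [pow_zero, Nat.choose_zero_right, Nat.sub_zero, Nat.cast_one, one_mul] at h h'
      have : (treeCount n : ℤ) = ((n ^ (n - 2) : ℕ) : ℤ) := by linarith
      exact_mod_cast this

lemma card_filter_leaves' {n : ℕ} (hn : 3 ≤ n) (S : Finset (Fin n)) :
    (Finset.univ.filter fun T : LTree n => S ⊆ leafSet T.1).card = (n - S.card) ^ (n - 2) := by
  rw [card_filter_leaves hn, pow_mul_treeCount_aux hn (by simpa using S.card_le_univ)
    (treeCount_eq _)]

/-- The generating polynomial of the number of leaves. -/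
lemma sum_pow_leafCount {R : Type*} [CommRing R] {n : ℕ} (hn : 3 ≤ n) (w : R) :
    ∑ T : LTree n, w ^ leafCount T.1 =
      ∑ k ∈ Finset.range (n + 1), (n.choose k : R) * ((w - 1) ^ k * ((n - k : ℕ) : R) ^ (n - 2)) := by
  rw [sum_pow_leafCount_aux hn]
  refine Finset.sum_congr rfl fun k hk => ?_
  rw [pow_mul_treeCount_aux hn (by simpa [Nat.lt_succ_iff] using hk) (treeCount_eq _), Nat.cast_pow]

lemma card_LTree {n : ℕ} (hn : 1 ≤ n) : Nat.card (LTree n) = n ^ (n - 2) := treeCount_eq n hn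

lemma leafCount_eq_sum {n : ℕ} (T : SimpleGraph (Fin n)) :
    leafCount T = ∑ v : Fin n, if v ∈ leafSet T then 1 else 0 := by
  classical
  rw [← card_leafSet]; simp

lemma sum_leafCount {n : ℕ} (hn : 3 ≤ n) :
    ∑ T : LTree n, leafCount T.1 = n * (n - 1) ^ (n - 2) := by
  classical
  simp_rw [leafCount_eq_sum]
  rw [Finset.sum_comm]
  have : ∀ v : Fin n, (∑ T : LTree n, if v ∈ leafSet T.1 then 1 else 0) = (n - 1) ^ (n - 2) := by
    intro v
    have := card_filter_leaves' hn {v}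
    simpa using this
  simp [this]

lemma sum_leafCount_sq {n : ℕ} (hn : 3 ≤ n) :
    ∑ T : LTree n, leafCount T.1 ^ 2 =
      n * (n - 1) * (n - 2) ^ (n - 2) + n * (n - 1) ^ (n - 2) := by
  classical
  have h1 : ∀ T : LTree n, leafCount T.1 ^ 2 =
      ∑ u : Fin n, ∑ v : Fin n, if {u, v} ⊆ leafSet T.1 then 1 else 0 := by
    intro T
    rw [sq, leafCount_eq_sum, Finset.sum_mul_sum]
    refine Finset.sum_congr rfl fun u _ => Finset.sum_congr rfl fun v _ => ?_
    simp only [Finset.insert_subset_iff, Finset.singleton_subset_iff, ite_and]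
    split_ifs <;> simp
  simp_rw [h1]
  rw [Finset.sum_comm]
  have h2 : ∀ u : Fin n, (∑ T : LTree n, ∑ v : Fin n, if {u, v} ⊆ leafSet T.1 then 1 else 0) =
      (n - 1) * (n - 2) ^ (n - 2) + (n - 1) ^ (n - 2) := by
    intro u
    rw [Finset.sum_comm, ← Finset.sum_erase_add _ _ (Finset.mem_univ u)]
    congr 1
    · rw [Finset.sum_congr rfl fun v hv => ?_, Finset.sum_const, Finset.card_erase_of_mem
        (Finset.mem_univ u), Finset.card_univ, Fintype.card_fin, smul_eq_mul]
      have := card_filter_leaves' hn {u, v}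
      rw [Finset.card_pair (Finset.ne_of_mem_erase hv).symm] at this
      rw [← this, Finset.card_filter]
    · have := card_filter_leaves' hn {u}
      rw [Finset.card_singleton] at this
      rw [← this, Finset.card_filter]
      simp
  rw [Finset.sum_congr rfl fun u _ => h2 u]
  simp
  ring

open Filter Topology Complex
open scoped Real

/-! ### Integral representation -/

/-- `𝔼 [e^{iθN} w^{1_{N = 0}}]` for a Poisson variable `N` of mean `1`, in closed form. -/
noncomputable def phi (θ : ℝ) (w : ℂ) : ℂ := exp (exp (θ * I) - 1) + exp (-1) * (w - 1)

lemma phi_eq (θ : ℝ) (w : ℂ) : phi θ w = exp (-1) * (exp (exp (θ * I)) + (w - 1)) := by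
  rw [phi, sub_eq_neg_add, exp_add]; ring

lemma continuous_phi (w : ℂ) : Continuous fun θ => phi θ w := by
  unfold phi; fun_prop

lemma iteratedDeriv_exp_mul (a : ℂ) (m : ℕ) :
    iteratedDeriv m (fun z : ℂ => exp (a * z)) 0 = a ^ m := by
  simp [iteratedDeriv_cexp_const_mul]

/-- Cauchy's formula on the unit circle for the Taylor coefficients of `z ↦ exp (a * z)`. -/
lemma integral_exp_exp (a : ℂ) (m : ℕ) :
    ∫ θ in (-π)..π, exp (-(m * θ * I)) * exp (a * exp (θ * I)) = 2 * π / m.factorial * a ^ m := by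
  have h := DifferentiableOn.circleIntegral_one_div_sub_center_pow_smul (f := fun z => exp (a * z))
    (c := 0) (R := 1) one_pos m (by fun_prop)
  rw [iteratedDeriv_exp_mul, circleIntegral] at h
  have h2 : ∀ θ : ℝ, deriv (circleMap 0 1) θ • ((1 / (circleMap 0 1 θ - 0) ^ (m + 1)) •
      exp (a * circleMap 0 1 θ)) = I * (exp (-(m * θ * I)) * exp (a * exp (θ * I))) := by
    intro θ
    simp only [deriv_circleMap, circleMap, ofReal_one, one_mul, zero_add, sub_zero, smul_eq_mul]
    rw [exp_neg, show (m : ℂ) * θ * I = m * (θ * I) by ring, exp_nat_mul, pow_succ]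
    field_simp [exp_ne_zero]
  simp_rw [h2] at h
  rw [intervalIntegral.integral_const_mul] at h
  have hper : Function.Periodic (fun θ : ℝ => exp (-(m * θ * I)) * exp (a * exp (θ * I))) (2 * π) := by
    intro θ
    have e1 : exp (((θ + 2 * π : ℝ) : ℂ) * I) = exp (θ * I) := by
      push_cast
      rw [add_mul, exp_add, exp_two_pi_mul_I, mul_one]
    have e2 : ∀ θ : ℝ, exp (-(m * θ * I)) = (exp (θ * I) ^ m)⁻¹ := by
      intro θ
      rw [exp_neg, ← exp_nat_mul]; ring_nf
    simp only [e1, e2]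
  have h3 := hper.intervalIntegral_add_eq (-π) 0
  rw [show -π + 2 * π = π by ring, zero_add] at h3
  rw [h3]
  have : I ≠ 0 := I_ne_zero
  apply mul_left_cancel₀ this
  rw [h]
  simp only [smul_eq_mul]
  ring

/-- For `m = n - 2` the sum on the right is the generating polynomial of the number of leaves. -/
lemma integral_phi_pow (n m : ℕ) (w : ℂ) :
    ∫ θ in (-π)..π, exp (-(m * θ * I)) * phi θ w ^ n =
      exp (-1) ^ n * (2 * π / m.factorial) *
        ∑ k ∈ Finset.range (n + 1), (n.choose k : ℂ) * ((w - 1) ^ k * ((n - k : ℕ) : ℂ) ^ m) := by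
  have h1 : ∀ θ : ℝ, exp (-(m * θ * I)) * phi θ w ^ n =
      ∑ k ∈ Finset.range (n + 1), (exp (-1) ^ n * (n.choose k : ℂ) * (w - 1) ^ k) *
        (exp (-(m * θ * I)) * exp (((n - k : ℕ) : ℂ) * exp (θ * I))) := by
    intro θ
    rw [phi_eq, mul_pow, add_comm (exp (exp _)), add_pow, Finset.mul_sum, Finset.mul_sum]
    refine Finset.sum_congr rfl fun k _ => ?_
    rw [exp_nat_mul]; ring
  simp_rw [h1]
  rw [intervalIntegral.integral_finsetSum]
  · simp_rw [intervalIntegral.integral_const_mul, integral_exp_exp]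
    rw [Finset.mul_sum]
    refine Finset.sum_congr rfl fun k _ => ?_
    ring
  · intro k _
    apply Continuous.intervalIntegrable
    fun_prop

/-- A constant `c > 0` such that `‖phi θ w‖ ≤ exp (-c θ²)` for `|θ| ≤ π` and `‖w‖ = 1`. -/
noncomputable def rate : ℝ := Real.exp (-1) * (2 / π ^ 2) / 3

lemma rate_pos : 0 < rate := by unfold rate; positivity

/-- Up to the factor `e⁻¹`, `phi` equals `w + (z + z² / 2) + (exp z - 1 - z - z² / 2)` with
`z = e^{iθ}`. The first and last terms are bounded by their values at `w = z = 1`, and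
`z + z² / 2` alone supplies the decay in `θ`. -/
lemma norm_phi_le {θ : ℝ} (hθ : |θ| ≤ π) {w : ℂ} (hw : ‖w‖ = 1) :
    ‖phi θ w‖ ≤ Real.exp (-rate * θ ^ 2) := by
  set z := exp (θ * I) with hz
  have hz1 : ‖z‖ = 1 := norm_exp_ofReal_mul_I θ
  set y := 2 / π ^ 2 * θ ^ 2 with hy
  have hy0 : 0 ≤ y := by positivity
  have hcos : Real.cos θ ≤ 1 - y := Real.cos_le_one_sub_mul_cos_sq hθ
  have h1 : ‖z + z ^ 2 / 2‖ ≤ 3 / 2 - y / 3 := by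
    have : z + z ^ 2 / 2 = z * (1 + z / 2) := by ring
    rw [this, norm_mul, hz1, one_mul]
    have h2 : ‖1 + z / 2‖ ^ 2 = 5 / 4 + Real.cos θ := by
      rw [← normSq_eq_norm_sq, normSq_apply, hz]
      simp [exp_ofReal_mul_I_re, exp_ofReal_mul_I_im]
      nlinarith [Real.sin_sq_add_cos_sq θ]
    have hy2 : y ≤ 2 := by linarith [Real.neg_one_le_cos θ]
    apply abs_le_of_sq_le_sq' _ (by linarith) |>.2
    nlinarith
  have h3 : ‖exp z - (1 + z + z ^ 2 / 2)‖ ≤ Real.exp 1 - 5 / 2 := by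
    have := norm_exp_sub_sum_le_exp_norm_sub_sum z 3
    simp [Finset.sum_range_succ, hz1, Nat.factorial] at this
    refine this.trans (le_of_eq ?_)
    ring
  have h4 : ‖exp z + (w - 1)‖ ≤ Real.exp 1 - y / 3 := by
    have : exp z + (w - 1) = (exp z - (1 + z + z ^ 2 / 2)) + (z + z ^ 2 / 2) + w := by ring
    rw [this]
    refine (norm_add₃_le).trans ?_
    rw [hw]; linarith
  have h5 : ‖phi θ w‖ ≤ 1 - rate * θ ^ 2 := by
    rw [phi_eq, norm_mul, ← hz]
    have : ‖exp (-1)‖ = Real.exp (-1) := by rw [norm_exp]; simp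
    rw [this]
    calc Real.exp (-1) * ‖exp z + (w - 1)‖ ≤ Real.exp (-1) * (Real.exp 1 - y / 3) := by gcongr
      _ = 1 - rate * θ ^ 2 := by
        rw [mul_sub, ← Real.exp_add, hy, rate]; simp; ring
  refine h5.trans ?_
  have := Real.add_one_le_exp (-rate * θ ^ 2)
  linarith

/-- The expansion of `exp (a n * h n)` to second order in `h n → 0`, with the remainder absorbed
into the coefficient `E n` of `h n ^ 2`. -/
lemma taylor_exp {a : ℕ → ℂ} {h : ℕ → ℂ} {a₀ : ℂ} (ha : Tendsto a atTop (𝓝 a₀))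
    (hh : Tendsto h atTop (𝓝 0)) (h0 : ∀ᶠ n in atTop, h n ≠ 0) :
    ∃ E : ℕ → ℂ, Tendsto E atTop (𝓝 (a₀ ^ 2 / 2)) ∧
      ∀ᶠ n in atTop, exp (a n * h n) = 1 + a n * h n + E n * h n ^ 2 := by
  refine ⟨fun n => (exp (a n * h n) - 1 - a n * h n) / h n ^ 2, ?_, ?_⟩
  · have key : Tendsto (fun n => (exp (a n * h n) - 1 - a n * h n) / h n ^ 2 - a n ^ 2 / 2) atTop
        (𝓝 0) := by
      have hb : Tendsto (fun n => ‖a n‖ ^ 3 * ‖h n‖ * Real.exp ‖a n * h n‖) atTop (𝓝 0) := by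
        have := ((ha.norm.pow 3).mul hh.norm).mul
          ((Real.continuous_exp.tendsto _).comp (ha.mul hh).norm)
        simpa using this
      refine squeeze_zero_norm' ?_ hb
      filter_upwards [h0] with n hn
      have h3 := norm_exp_sub_sum_le_norm_mul_exp (a n * h n) 3
      have e : (exp (a n * h n) - 1 - a n * h n) / h n ^ 2 - a n ^ 2 / 2 =
          (exp (a n * h n) - ∑ m ∈ Finset.range 3, (a n * h n) ^ m / m.factorial) / h n ^ 2 := by
        simp [Finset.sum_range_succ, Nat.factorial]
        field_simp
        ring
      rw [e, norm_div, norm_pow, div_le_iff₀ (by positivity)]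
      refine h3.trans (le_of_eq ?_)
      rw [norm_mul]; ring
    have := key.add ((ha.pow 2).div_const 2)
    simpa using this
  · filter_upwards [h0] with n hn
    field_simp
    ring

/-- The pointwise limit of the rescaled and centred `n`-th power. With `h = 1 / √n`, the base is
`1 + (c + o(1)) h²`, since the exponential factor cancels the first-order term of `phi`. -/
lemma tendsto_phi_pow (x : ℝ) {s : ℕ → ℝ} {s₀ : ℝ} (hs : Tendsto s atTop (𝓝 s₀)) :
    Tendsto (fun n : ℕ => (exp (-(I * (x + s n * exp (-1))) * ((√n)⁻¹ : ℝ)) *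
        phi ((√n)⁻¹ * x) (exp (I * s n * ((√n)⁻¹ : ℝ)))) ^ n) atTop
      (𝓝 (exp (-1 / 2 * (x : ℂ) ^ 2 + s₀ * exp (-1) * x +
        -(s₀ ^ 2 * (exp (-1) - exp (-1) ^ 2) / 2)))) := by
  set e := exp (-1) with he
  let h : ℕ → ℂ := fun n => (((√n)⁻¹ : ℝ) : ℂ)
  have hsq : Tendsto (fun n : ℕ => (√(n : ℝ))⁻¹) atTop (𝓝 0) :=
    tendsto_inv_atTop_zero.comp (Real.tendsto_sqrt_atTop.comp tendsto_natCast_atTop_atTop)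
  have hh : Tendsto h atTop (𝓝 0) := by
    have := (continuous_ofReal.tendsto 0).comp hsq
    simpa [h, Function.comp_def] using this
  have h0 : ∀ᶠ n in atTop, h n ≠ 0 := by
    filter_upwards [eventually_gt_atTop 0] with n hn
    simp [h, hn.ne']
  have hnh : ∀ᶠ n : ℕ in atTop, (n : ℂ) * h n ^ 2 = 1 := by
    filter_upwards [eventually_gt_atTop 0] with n hn
    have : (n : ℝ) * (√n)⁻¹ ^ 2 = 1 := by
      rw [inv_pow, Real.sq_sqrt (by positivity)]
      field_simp
    simp only [h]
    exact_mod_cast this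
  have hsC : Tendsto (fun n => (s n : ℂ)) atTop (𝓝 s₀) := (continuous_ofReal.tendsto _).comp hs
  let α : ℕ → ℂ := fun n => -(I * (x + s n * e))
  have hα : Tendsto α atTop (𝓝 (-(I * (x + s₀ * e)))) :=
    ((hsC.mul_const e).const_add (x : ℂ) |>.const_mul I).neg
  obtain ⟨A, hA, hA'⟩ := taylor_exp hα hh h0
  obtain ⟨B, hB, hB'⟩ := taylor_exp (tendsto_const_nhds (x := (x * I : ℂ))) hh h0
  have hc : Tendsto (fun n => x * I + B n * h n) atTop (𝓝 (x * I)) := by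
    simpa using (hB.mul hh).const_add (x * I : ℂ)
  obtain ⟨C, hC, hC'⟩ := taylor_exp hc hh h0
  obtain ⟨D, hD, hD'⟩ := taylor_exp (hsC.const_mul I) hh h0
  let M : ℕ → ℂ := fun n => B n + C n + e * D n
  have hM : Tendsto M atTop (𝓝 ((x * I) ^ 2 / 2 + (x * I) ^ 2 / 2 + e * ((I * s₀) ^ 2 / 2))) :=
    (hB.add hC).add (hD.const_mul e)
  have hlim : Tendsto (fun n => A n + M n - α n ^ 2 + h n * (α n * M n - A n * α n)
      + A n * M n * h n ^ 2) atTop (𝓝 (-1 / 2 * (x : ℂ) ^ 2 + s₀ * e * x +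
        -(s₀ ^ 2 * (e - e ^ 2) / 2))) := by
    have := (((hA.add hM).sub (hα.pow 2)).add (hh.mul ((hα.mul hM).sub (hA.mul hα)))).add
      ((hA.mul hM).mul (hh.pow 2))
    convert this using 2
    have : I ^ 2 = -1 := I_sq
    linear_combination (-(x:ℂ)^2/2 + x * s₀ * e + s₀^2*e^2/2 - e * s₀^2/2) * this
  set G : ℕ → ℂ := fun n => exp (-(I * (x + s n * e)) * ((√n)⁻¹ : ℝ)) *
        phi ((√n)⁻¹ * x) (exp (I * s n * ((√n)⁻¹ : ℝ))) with hG
  have hfin : Tendsto (fun n : ℕ => (n : ℂ) * (G n - 1)) atTop (𝓝 (-1 / 2 * (x : ℂ) ^ 2 + s₀ * e * x +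
        -(s₀ ^ 2 * (e - e ^ 2) / 2))) := by
    refine hlim.congr' ?_
    filter_upwards [hA', hB', hC', hD', hnh] with n a b c d hn
    have hphi : phi ((√n)⁻¹ * x) (exp (I * s n * ((√n)⁻¹ : ℝ))) = 1 - α n * h n + M n * h n ^ 2 := by
      unfold phi
      have e1 : ((((√n)⁻¹ * x : ℝ)) : ℂ) * I = x * I * h n := by
        simp only [h]; push_cast; ring
      have d' : exp (I * s n * ((√n)⁻¹ : ℝ)) = 1 + I * s n * h n + D n * h n ^ 2 := d
      rw [e1, b, show 1 + x * I * h n + B n * h n ^ 2 - 1 = (x * I + B n * h n) * h n by ring, c, d']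
      simp only [α, M]
      ring
    have hGn : G n = (1 + α n * h n + A n * h n ^ 2) * (1 - α n * h n + M n * h n ^ 2) := by
      rw [← hphi, ← a]
    rw [hGn]
    linear_combination (-(A n + M n - α n ^ 2 + h n * (α n * M n - A n * α n)
      + A n * M n * h n ^ 2)) * hn
  refine (tendsto_one_add_pow_exp_of_tendsto hfin).congr fun n => ?_
  rw [add_sub_cancel]

/-! ### Asymptotics of the mean and the variance -/

/-- The probability `(1 - 1 / n) ^ (n - 2)` that a given vertex is a leaf is `e⁻¹ + O(1 / n)`. -/
lemma pow_bounds {n : ℕ} (hn : 2 ≤ n) :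
    Real.exp (-1) ≤ (1 - 1 / (n : ℝ)) ^ (n - 2) ∧
      (1 - 1 / (n : ℝ)) ^ (n - 2) ≤ Real.exp (-1) * (1 - 1 / (n : ℝ))⁻¹ ^ 2 := by
  have hn' : (2 : ℝ) ≤ n := by exact_mod_cast hn
  have hx : 1 / (n : ℝ) ≤ 1 / 2 := by gcongr
  have hx0 : 0 < 1 / (n : ℝ) := by positivity
  have hpos : 0 < 1 - 1 / (n : ℝ) := by linarith
  constructor
  · have h1 : (1 - 1 / (n : ℝ)) ^ (n - 1) ≤ (1 - 1 / (n : ℝ)) ^ (n - 2) :=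
      pow_le_pow_of_le_one hpos.le (by linarith) (by omega)
    refine le_trans ?_ h1
    -- `1 / (1 - 1/n) = 1 + 1/(n-1) ≤ exp (1/(n-1))`
    have h2 : Real.exp (-(1 / ((n : ℝ) - 1))) ≤ 1 - 1 / (n : ℝ) := by
      rw [Real.exp_neg, inv_le_comm₀ (Real.exp_pos _) hpos]
      have := Real.add_one_le_exp (1 / ((n : ℝ) - 1))
      refine le_trans (le_of_eq ?_) this
      have : (n : ℝ) - 1 ≠ 0 := by linarith
      field_simp
      ring
    calc Real.exp (-1) = Real.exp (-(1 / ((n : ℝ) - 1))) ^ (n - 1) := by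
          rw [← Real.exp_nat_mul]
          congr 1
          have : (n : ℝ) - 1 ≠ 0 := by linarith
          push_cast [show 1 ≤ n by omega]
          field_simp
      _ ≤ _ := by gcongr
  · have h1 : (1 - 1 / (n : ℝ)) ^ n ≤ Real.exp (-1) := by
      calc (1 - 1 / (n : ℝ)) ^ n ≤ Real.exp (-(1 / (n : ℝ))) ^ n := by
            gcongr
            exact Real.one_sub_le_exp_neg _
        _ = Real.exp (-1) := by
          rw [← Real.exp_nat_mul]
          congr 1
          field_simp
    have h2 : (1 - 1 / (n : ℝ)) ^ (n - 2) * (1 - 1 / (n : ℝ)) ^ 2 = (1 - 1 / (n : ℝ)) ^ n := by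
      rw [← pow_add]; congr 1; omega
    rw [inv_pow, ← div_eq_mul_inv, le_div_iff₀ (by positivity), h2]
    exact h1

lemma tendsto_inv_nat : Tendsto (fun n : ℕ => 1 / (n : ℝ)) atTop (𝓝 0) :=
  tendsto_one_div_atTop_nhds_zero_nat

lemma tendsto_p : Tendsto (fun n : ℕ => (1 - 1 / (n : ℝ)) ^ (n - 2)) atTop (𝓝 (Real.exp (-1))) := by
  have h : Tendsto (fun n : ℕ => Real.exp (-1) * (1 - 1 / (n : ℝ))⁻¹ ^ 2) atTop
      (𝓝 (Real.exp (-1))) := by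
    have := (((tendsto_inv_nat.const_sub 1).inv₀ (by norm_num)).pow 2).const_mul (Real.exp (-1))
    simpa using this
  refine tendsto_of_tendsto_of_tendsto_of_le_of_le' tendsto_const_nhds h ?_ ?_
  · filter_upwards [eventually_ge_atTop 2] with n hn using (pow_bounds hn).1
  · filter_upwards [eventually_ge_atTop 2] with n hn using (pow_bounds hn).2

/-- `E_n - n / e = o(√n)`, for the explicit value of `E_n`. -/
lemma tendsto_mean_aux :
    Tendsto (fun n : ℕ => √n * ((1 - 1 / (n : ℝ)) ^ (n - 2) - Real.exp (-1))) atTop (𝓝 0) := by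
  have hu : Tendsto (fun n : ℕ => 8 * (√(n : ℝ))⁻¹) atTop (𝓝 0) := by
    have : Tendsto (fun n : ℕ => (√(n : ℝ))⁻¹) atTop (𝓝 0) :=
      tendsto_inv_atTop_zero.comp (Real.tendsto_sqrt_atTop.comp tendsto_natCast_atTop_atTop)
    simpa using this.const_mul 8
  refine tendsto_of_tendsto_of_tendsto_of_le_of_le' tendsto_const_nhds hu ?_ ?_
  · filter_upwards [eventually_ge_atTop 2] with n hn
    have := (pow_bounds hn).1
    have : 0 ≤ (1 - 1 / (n : ℝ)) ^ (n - 2) - Real.exp (-1) := by linarith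
    positivity
  · filter_upwards [eventually_ge_atTop 2] with n hn
    have h := (pow_bounds hn).2
    have hn' : (2 : ℝ) ≤ n := by exact_mod_cast hn
    have hx : 1 / (n : ℝ) ≤ 1 / 2 := by gcongr
    have hx0 : 0 < 1 / (n : ℝ) := by positivity
    have hpos : 0 < 1 - 1 / (n : ℝ) := by linarith
    have he : Real.exp (-1) ≤ 1 := Real.exp_le_one_iff.2 (by norm_num)
    have h1 : (1 - 1 / (n : ℝ))⁻¹ ^ 2 ≤ 1 + 8 * (1 / (n : ℝ)) := by
      rw [inv_pow, inv_le_comm₀ (by positivity) (by positivity), inv_le_iff_one_le_mul₀ (by positivity)]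
      generalize 1 / (n : ℝ) = x at *
      nlinarith [mul_nonneg hx0.le (sub_nonneg.2 hx),
        mul_nonneg (mul_nonneg hx0.le hx0.le) (sub_nonneg.2 hx), mul_pos hx0 hx0,
        mul_pos (mul_pos hx0 hx0) hx0]
    have h2 : (1 - 1 / (n : ℝ)) ^ (n - 2) - Real.exp (-1) ≤ 8 * (1 / (n : ℝ)) := by
      have := Real.exp_pos (-1)
      nlinarith
    calc √n * ((1 - 1 / (n : ℝ)) ^ (n - 2) - Real.exp (-1)) ≤ √n * (8 * (1 / (n : ℝ))) := by gcongr
      _ = 8 * (√(n : ℝ))⁻¹ := by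
        have : √(n : ℝ) ≠ 0 := by positivity
        have h3 : √(n : ℝ) * √n = n := Real.mul_self_sqrt (by positivity)
        rw [← h3, Real.sqrt_mul_self (by positivity)]
        field_simp

/-- `V_n / n → e⁻¹ - 2 e⁻²`, for the explicit value of `V_n`. The terms of order `n` cancel because
`(1 - 2 / n) ^ (n - 2)` is the square of `(1 - 1 / n) ^ (n - 2)` times a factor `r n = 1 - 1 / n +
o(1 / n)`. -/
lemma tendsto_var_aux :
    Tendsto (fun n : ℕ => ((n : ℝ) - 1) * (1 - 2 / (n : ℝ)) ^ (n - 2) + (1 - 1 / (n : ℝ)) ^ (n - 2)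
      - n * ((1 - 1 / (n : ℝ)) ^ (n - 2)) ^ 2) atTop
      (𝓝 (Real.exp (-1) - 2 * Real.exp (-1) ^ 2)) := by
  let r : ℕ → ℝ := fun n => (1 - 1 / ((n : ℝ) - 1) ^ 2) ^ (n - 2)
  let y : ℕ → ℝ := fun n => ((n : ℝ) - 2) * (1 / ((n : ℝ) - 1) ^ 2)
  have hny : Tendsto (fun n : ℕ => (n : ℝ) * y n) atTop (𝓝 1) := by
    have h1 : Tendsto (fun n : ℕ => (1 - 2 * (1 / (n : ℝ))) / (1 - 1 / (n : ℝ)) ^ 2) atTop (𝓝 1) := by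
      have := ((tendsto_inv_nat.const_mul 2).const_sub 1).div ((tendsto_inv_nat.const_sub 1).pow 2)
        (by norm_num)
      simpa [Pi.div_def] using this
    refine h1.congr' ?_
    filter_upwards [eventually_ge_atTop 2] with n hn
    have hn' : (2 : ℝ) ≤ n := by exact_mod_cast hn
    have : (n : ℝ) - 1 ≠ 0 := by linarith
    simp only [y]
    field_simp
  have hy : Tendsto y atTop (𝓝 0) := by
    have := hny.mul tendsto_inv_nat
    rw [mul_zero] at this
    refine this.congr' ?_
    filter_upwards [eventually_ge_atTop 2] with n hn
    field_simp
  have hr : Tendsto (fun n : ℕ => (n : ℝ) * (r n - 1)) atTop (𝓝 (-1)) := by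
    have hlow : Tendsto (fun n : ℕ => -((n : ℝ) * y n)) atTop (𝓝 (-1)) := hny.neg
    have hup : Tendsto (fun n : ℕ => -((n : ℝ) * y n) + (n * y n) * y n) atTop (𝓝 (-1)) := by
      simpa using hny.neg.add (hny.mul hy)
    refine tendsto_of_tendsto_of_tendsto_of_le_of_le' hlow hup ?_ ?_
    · filter_upwards [eventually_ge_atTop 3] with n hn
      have hn' : (3 : ℝ) ≤ n := by exact_mod_cast hn
      have hb : 1 / ((n : ℝ) - 1) ^ 2 ≤ 1 := by
        rw [div_le_one (by nlinarith)]; nlinarith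
      have := one_add_mul_le_pow (a := -(1 / ((n : ℝ) - 1) ^ 2)) (by linarith) (n - 2)
      push_cast [show 2 ≤ n by omega] at this
      have h2 : -y n ≤ r n - 1 := by simp only [y, r, sub_eq_add_neg] at this ⊢; linarith
      have := mul_le_mul_of_nonneg_left h2 (by positivity : (0 : ℝ) ≤ n)
      linarith
    · filter_upwards [eventually_ge_atTop 3, hy.eventually (eventually_le_nhds zero_lt_one)]
        with n hn hy1
      have hn' : (3 : ℝ) ≤ n := by exact_mod_cast hn
      have hb : 1 / ((n : ℝ) - 1) ^ 2 ≤ 1 := by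
        rw [div_le_one (by nlinarith)]; nlinarith
      have hy0 : 0 ≤ y n := by
        have : (0 : ℝ) ≤ n - 2 := by linarith
        simp only [y]; positivity
      have h1 : r n ≤ Real.exp (-y n) := by
        calc r n ≤ Real.exp (-(1 / ((n : ℝ) - 1) ^ 2)) ^ (n - 2) := by
              simp only [r]
              gcongr
              exact Real.one_sub_le_exp_neg _
          _ = Real.exp (-y n) := by
            rw [← Real.exp_nat_mul]
            congr 1
            push_cast [show 2 ≤ n by omega]
            simp only [y]; ring
      have h2 : Real.exp (-y n) ≤ 1 - y n + y n ^ 2 := by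
        have := (abs_le.1 (Real.abs_exp_sub_one_sub_id_le (x := -y n)
          (by rw [abs_neg, abs_of_nonneg hy0]; exact hy1))).2
        nlinarith
      have := mul_le_mul_of_nonneg_left (h1.trans h2) (by positivity : (0 : ℝ) ≤ n)
      nlinarith
  have hr1 : Tendsto r atTop (𝓝 1) := by
    have := (hr.mul tendsto_inv_nat).add_const 1
    rw [mul_zero, zero_add] at this
    refine this.congr' ?_
    filter_upwards [eventually_ge_atTop 2] with n hn
    field_simp
    ring
  have hp := tendsto_p
  have hlim := (((hp.pow 2).mul hr).sub ((hp.pow 2).mul hr1)).add hp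
  have hval : Real.exp (-1) ^ 2 * -1 - Real.exp (-1) ^ 2 * 1 + Real.exp (-1) =
      Real.exp (-1) - 2 * Real.exp (-1) ^ 2 := by ring
  rw [hval] at hlim
  refine hlim.congr' ?_
  filter_upwards [eventually_ge_atTop 3] with n hn
  have hn' : (3 : ℝ) ≤ n := by exact_mod_cast hn
  have hq : (1 - 2 / (n : ℝ)) ^ (n - 2) = ((1 - 1 / (n : ℝ)) ^ (n - 2)) ^ 2 * r n := by
    simp only [r]
    rw [← pow_mul, mul_comm (n - 2) 2, pow_mul, ← mul_pow]
    congr 1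
    have : (n : ℝ) - 1 ≠ 0 := by linarith
    field_simp
    ring
  rw [hq]
  ring

lemma var_pos : 0 < Real.exp (-1) - 2 * Real.exp (-1) ^ 2 := by
  have h : Real.exp (-1) < 1 / 2 := by
    rw [Real.exp_neg, inv_lt_comm₀ (Real.exp_pos _) (by norm_num)]
    have := Real.exp_one_gt_d9
    norm_num; linarith
  have := Real.exp_pos (-1)
  nlinarith

/-! ### Convergence of the characteristic functions around `n / e` -/

/-- The integrand of `integral_phi_pow` for `m = n - 2` and `w = exp (i s / √n)` after the
substitution `θ = x / √n`, multiplied by `exp (-i s √n / e)` to centre the leaf count at `n / e`.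
The first factor accounts for the `2` in `n - 2`. -/
noncomputable def integrand (n : ℕ) (s x : ℝ) : ℂ :=
  exp (2 * I * x * ((√n)⁻¹ : ℝ)) * (exp (-(I * (x + s * exp (-1))) * ((√n)⁻¹ : ℝ)) *
        phi ((√n)⁻¹ * x) (exp (I * s * ((√n)⁻¹ : ℝ)))) ^ n

/-- The integral of `integrand` over the image of `[-π, π]`. Up to a factor independent of `s`, it is
the characteristic function of `(ℓ - n / e) / √n` at `s`. -/
noncomputable def K (n : ℕ) (s : ℝ) : ℂ := ∫ x in (-(π * √n))..(π * √n), integrand n s x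

lemma continuous_integrand (n : ℕ) (s : ℝ) : Continuous (integrand n s) := by
  unfold integrand
  have : Continuous fun x : ℝ => phi ((√n)⁻¹ * x) (exp (I * s * ((√n)⁻¹ : ℝ))) :=
    (continuous_phi _).comp (by fun_prop)
  fun_prop

lemma norm_exp_I_mul (a b : ℝ) : ‖exp (I * a * b)‖ = 1 := by
  rw [show I * a * b = ((a * b : ℝ) : ℂ) * I by push_cast; ring, norm_exp_ofReal_mul_I]

lemma norm_integrand_le {n : ℕ} (hn : 0 < n) (s x : ℝ) (hx : |x| ≤ π * √n) :
    ‖integrand n s x‖ ≤ Real.exp (-rate * x ^ 2) := by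
  have hn' : (0 : ℝ) < n := by exact_mod_cast hn
  have h0 : 0 < √(n : ℝ) := Real.sqrt_pos.2 hn'
  have e1 : ‖exp (2 * I * x * ((√n)⁻¹ : ℝ))‖ = 1 := by
    have := norm_exp_I_mul (2 * x) (√n)⁻¹
    rw [← this]; push_cast; ring_nf
  have e2 : ‖exp (-(I * (x + s * exp (-1))) * ((√n)⁻¹ : ℝ))‖ = 1 := by
    have := norm_exp_I_mul (-(x + s * Real.exp (-1))) (√n)⁻¹
    rw [← this]; push_cast; ring_nf
  rw [integrand, norm_mul, e1, one_mul, norm_pow, norm_mul, e2, one_mul]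
  have h1 : |(√n)⁻¹ * x| ≤ π := by
    rw [abs_mul, abs_of_pos (inv_pos.2 h0), inv_mul_le_iff₀ h0, mul_comm]; exact hx
  have h2 := norm_phi_le h1 (norm_exp_I_mul s (√n)⁻¹)
  calc _ ≤ Real.exp (-rate * ((√n)⁻¹ * x) ^ 2) ^ n := by gcongr
    _ = Real.exp (-rate * x ^ 2) := by
      rw [← Real.exp_nat_mul]
      congr 1
      rw [mul_pow, inv_pow, Real.sq_sqrt hn'.le]
      field_simp

lemma tendsto_integrand {s : ℕ → ℝ} {s₀ : ℝ} (hs : Tendsto s atTop (𝓝 s₀)) (x : ℝ) :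
    Tendsto (fun n => integrand n (s n) x) atTop
      (𝓝 (exp (-1 / 2 * (x : ℂ) ^ 2 + s₀ * exp (-1) * x +
        -(s₀ ^ 2 * (exp (-1) - exp (-1) ^ 2) / 2)))) := by
  have hsq : Tendsto (fun n : ℕ => (√(n : ℝ))⁻¹) atTop (𝓝 0) :=
    tendsto_inv_atTop_zero.comp (Real.tendsto_sqrt_atTop.comp tendsto_natCast_atTop_atTop)
  have h1 : Tendsto (fun n : ℕ => exp (2 * I * x * ((√n)⁻¹ : ℝ))) atTop (𝓝 1) := by
    have hc : Continuous fun r : ℝ => exp (2 * I * x * r) := by fun_prop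
    have := (hc.tendsto 0).comp hsq
    simpa [Function.comp_def] using this
  have := h1.mul (tendsto_phi_pow x hs)
  rw [one_mul] at this
  exact this

/-- By dominated convergence `K n (s n)` tends to a Gaussian integral. -/
lemma tendsto_K {s : ℕ → ℝ} {s₀ : ℝ} (hs : Tendsto s atTop (𝓝 s₀)) :
    Tendsto (fun n => K n (s n)) atTop
      (𝓝 ((2 * π : ℂ) ^ (1 / 2 : ℂ) *
        exp (-(s₀ ^ 2 * (exp (-1) - 2 * exp (-1) ^ 2) / 2)))) := by
  have hI := integral_cexp_quadratic (b := -1 / 2) (by norm_num) (s₀ * exp (-1))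
    (-(s₀ ^ 2 * (exp (-1) - exp (-1) ^ 2) / 2))
  have e1 : (π : ℂ) / -(-1 / 2) = 2 * π := by ring
  have e2 : -((s₀ : ℂ) ^ 2 * (exp (-1) - exp (-1) ^ 2) / 2) - (s₀ * exp (-1)) ^ 2 / (4 * (-1 / 2)) =
      -(s₀ ^ 2 * (exp (-1) - 2 * exp (-1) ^ 2) / 2) := by ring
  rw [e1, e2] at hI
  rw [← hI]
  have hK : ∀ n : ℕ, K n (s n) =
      ∫ x, (Set.Ioc (-(π * √n)) (π * √n)).indicator (integrand n (s n)) x := by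
    intro n
    rw [integral_indicator measurableSet_Ioc, K, intervalIntegral.integral_of_le]
    have := Real.pi_pos
    have : 0 ≤ π * √n := by positivity
    linarith
  simp_rw [hK]
  refine tendsto_integral_filter_of_dominated_convergence (fun x => Real.exp (-rate * x ^ 2)) ?_ ?_
    (integrable_exp_neg_mul_sq rate_pos) ?_
  · exact Eventually.of_forall fun n =>
      ((continuous_integrand n (s n)).aestronglyMeasurable).indicator measurableSet_Ioc
  · filter_upwards [eventually_gt_atTop 0] with n hn
    refine Eventually.of_forall fun x => ?_
    by_cases hx : x ∈ Set.Ioc (-(π * √n)) (π * √n)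
    · rw [Set.indicator_of_mem hx]
      exact norm_integrand_le hn _ _ (abs_le.2 ⟨hx.1.le, hx.2⟩)
    · rw [Set.indicator_of_notMem hx, norm_zero]
      positivity
  · refine Eventually.of_forall fun x => ?_
    refine (tendsto_integrand hs x).congr' ?_
    have : Tendsto (fun n : ℕ => π * √(n : ℝ)) atTop atTop :=
      (Real.tendsto_sqrt_atTop.comp tendsto_natCast_atTop_atTop).const_mul_atTop Real.pi_pos
    filter_upwards [this.eventually_gt_atTop |x|] with n hn
    rw [Set.indicator_of_mem]
    exact ⟨(abs_lt.1 hn).1, (abs_lt.1 hn).2.le⟩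

/-- `K n s` as a sum over trees. The prefactor does not depend on `s`, so it cancels in
`K n s / K n 0`. -/
lemma K_eq {n : ℕ} (hn : 3 ≤ n) (s : ℝ) :
    K n s = (√n * (exp (-1) ^ n * (2 * π / (n - 2).factorial)) : ℂ) *
      ∑ T : LTree n, exp (I * s * (leafCount T.1 - n * exp (-1)) * ((√n)⁻¹ : ℝ)) := by
  have hn' : (0 : ℝ) < n := by exact_mod_cast (by omega : 0 < n)
  have h0 : 0 < √(n : ℝ) := Real.sqrt_pos.2 hn'
  have hnC : (n : ℂ) * ((√n)⁻¹ : ℝ) = √n := by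
    have : (n : ℝ) * (√n)⁻¹ = √n := by
      rw [← div_eq_mul_inv, Real.div_sqrt]
    exact_mod_cast this
  set h : ℂ := (((√n)⁻¹ : ℝ) : ℂ) with hh
  set w := exp (I * s * h) with hw
  have e1 : ∀ x : ℝ, integrand n s x = exp (-(I * s * exp (-1) * (n * h))) *
      (fun θ : ℝ => exp (-(((n - 2 : ℕ) : ℂ) * θ * I)) * phi θ w ^ n) ((√n)⁻¹ * x) := by
    intro x
    simp only [integrand, ← hh, ← hw]
    rw [mul_pow, ← exp_nat_mul, ← mul_assoc (exp _), ← exp_add, ← mul_assoc (exp _), ← exp_add]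
    congr 2
    push_cast [show 2 ≤ n by omega, hh]
    ring
  have e2 : ∑ T : LTree n, exp (I * s * (leafCount T.1 - n * exp (-1)) * h) =
      exp (-(I * s * exp (-1) * (n * h))) * ∑ T : LTree n, w ^ leafCount T.1 := by
    rw [Finset.mul_sum]
    refine Finset.sum_congr rfl fun T _ => ?_
    rw [hw, ← exp_nat_mul, ← exp_add]
    congr 1
    ring
  rw [e2, sum_pow_leafCount hn, K]
  simp_rw [e1]
  rw [intervalIntegral.integral_const_mul,
    intervalIntegral.integral_comp_mul_left
      (fun θ : ℝ => exp (-(((n - 2 : ℕ) : ℂ) * θ * I)) * phi θ w ^ n) (inv_pos.2 h0).ne']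
  have b1 : (√n)⁻¹ * -(π * √n) = -π := by field_simp
  have b2 : (√n)⁻¹ * (π * √n) = π := by field_simp
  rw [b1, b2, integral_phi_pow, inv_inv, real_smul]
  ring

/-- The characteristic function of `(ℓ - n / e) / √n` at `s n → s₀` converges to that of a centred
Gaussian of variance `e⁻¹ - 2 e⁻²` at `s₀`. -/
lemma tendsto_char {s : ℕ → ℝ} {s₀ : ℝ} (hs : Tendsto s atTop (𝓝 s₀)) :
    Tendsto (fun n : ℕ => (∑ T : LTree n,
        exp (I * s n * (leafCount T.1 - n * exp (-1)) * ((√n)⁻¹ : ℝ))) / Nat.card (LTree n)) atTop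
      (𝓝 (exp (-(s₀ ^ 2 * (exp (-1) - 2 * exp (-1) ^ 2) / 2)))) := by
  have h1 := tendsto_K hs
  have h2 := tendsto_K (tendsto_const_nhds (x := (0 : ℝ)))
  have hne : (2 * π : ℂ) ^ (1 / 2 : ℂ) ≠ 0 := by
    rw [Ne, cpow_eq_zero_iff]
    have : (π : ℂ) ≠ 0 := by exact_mod_cast Real.pi_ne_zero
    simp [this]
  simp only [ofReal_zero, ne_eq, OfNat.ofNat_ne_zero, not_false_eq_true, zero_pow, zero_mul,
    zero_div, neg_zero, exp_zero, mul_one] at h2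
  have h3 := h1.div h2 hne
  rw [mul_div_cancel_left₀ _ hne] at h3
  refine h3.congr' ?_
  filter_upwards [eventually_ge_atTop 3] with n hn
  have hn' : (0 : ℝ) < n := by exact_mod_cast (by omega : 0 < n)
  have h0 : ((√(n : ℝ) : ℝ) : ℂ) ≠ 0 := by exact_mod_cast (Real.sqrt_pos.2 hn').ne'
  have hpi : (π : ℂ) ≠ 0 := by exact_mod_cast Real.pi_ne_zero
  have hf : ((n - 2).factorial : ℂ) ≠ 0 := by exact_mod_cast Nat.factorial_ne_zero _
  have hc : (√n * (exp (-1) ^ n * (2 * π / (n - 2).factorial)) : ℂ) ≠ 0 :=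
    mul_ne_zero h0 (mul_ne_zero (pow_ne_zero _ (exp_ne_zero _))
      (div_ne_zero (mul_ne_zero two_ne_zero hpi) hf))
  simp only [Pi.div_apply]
  rw [K_eq hn, K_eq hn, mul_div_mul_left _ _ hc]
  simp

/-! ### Moments and normalization -/

lemma integral_treeUniform {E : Type*} [NormedAddCommGroup E] [NormedSpace ℝ E] [CompleteSpace E]
    (n : ℕ) (f : LTree n → E) :
    ∫ T, f T ∂(treeUniform n) = (Nat.card (LTree n) : ℝ)⁻¹ • ∑ T : LTree n, f T := by
  rw [treeUniform, integral_smul_measure, integral_count]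
  simp

lemma isProbabilityMeasure_treeUniform {n : ℕ} (hn : 1 ≤ n) :
    IsProbabilityMeasure (treeUniform n) := by
  constructor
  have h : Nat.card (LTree n) ≠ 0 := by
    rw [card_LTree hn]; positivity
  rw [treeUniform, Measure.smul_apply, Measure.count_univ, smul_eq_mul]
  rw [ENat.card_eq_coe_natCard]
  exact ENNReal.inv_mul_cancel (by exact_mod_cast h) (by simp)

/-- The probability that `k` given vertices are all leaves. -/
lemma pow_div_pow {n : ℕ} (hn : 3 ≤ n) (k : ℕ) (hk : k ≤ 2) :
    ((n : ℝ) ^ (n - 2))⁻¹ * ((n - k : ℕ) : ℝ) ^ (n - 2) = (1 - k / (n : ℝ)) ^ (n - 2) := by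
  have hn' : (0 : ℝ) < n := by exact_mod_cast (by omega : 0 < n)
  rw [← inv_pow, ← mul_pow]
  congr 1
  push_cast [show k ≤ n by omega]
  field_simp

lemma En_eq {n : ℕ} (hn : 3 ≤ n) : En n = n * (1 - 1 / (n : ℝ)) ^ (n - 2) := by
  have h := sum_leafCount hn
  have h' : ∑ T : LTree n, (leafCount T.1 : ℝ) = n * ((n - 1 : ℕ) : ℝ) ^ (n - 2) := by
    exact_mod_cast h
  have := pow_div_pow hn 1 (by norm_num)
  rw [Nat.cast_one] at this
  rw [En, integral_treeUniform, h', card_LTree (by omega), smul_eq_mul, ← this]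
  push_cast
  ring

lemma Vn_eq {n : ℕ} (hn : 3 ≤ n) : Vn n = n * (((n : ℝ) - 1) * (1 - 2 / (n : ℝ)) ^ (n - 2) +
    (1 - 1 / (n : ℝ)) ^ (n - 2) - n * ((1 - 1 / (n : ℝ)) ^ (n - 2)) ^ 2) := by
  have h := sum_leafCount_sq hn
  have h' : ∑ T : LTree n, (leafCount T.1 : ℝ) ^ 2 = n * ((n : ℝ) - 1) * ((n - 2 : ℕ) : ℝ) ^ (n - 2)
      + n * ((n - 1 : ℕ) : ℝ) ^ (n - 2) := by
    have : ((n : ℝ) - 1) = ((n - 1 : ℕ) : ℝ) := by push_cast [show 1 ≤ n by omega]; ring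
    rw [this]
    exact_mod_cast h
  have h1 : ∑ T : LTree n, (leafCount T.1 : ℝ) = n * ((n - 1 : ℕ) : ℝ) ^ (n - 2) := by
    exact_mod_cast sum_leafCount hn
  have p1 := pow_div_pow hn 1 (by norm_num)
  have p2 := pow_div_pow hn 2 (by norm_num)
  rw [Nat.cast_one] at p1
  rw [Nat.cast_ofNat] at p2
  have hN : ((Nat.card (LTree n) : ℕ) : ℝ) = (n : ℝ) ^ (n - 2) := by
    rw [card_LTree (by omega)]; push_cast; ring
  have hN0 : (n : ℝ) ^ (n - 2) ≠ 0 := by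
    have : (n : ℝ) ≠ 0 := by exact_mod_cast (by omega : n ≠ 0)
    positivity
  rw [Vn, integral_treeUniform, smul_eq_mul, hN]
  have : ∑ T : LTree n, ((leafCount T.1 : ℝ) - En n) ^ 2 =
      ∑ T : LTree n, (leafCount T.1 : ℝ) ^ 2 - 2 * En n * ∑ T : LTree n, (leafCount T.1 : ℝ)
        + (n : ℝ) ^ (n - 2) * En n ^ 2 := by
    rw [← hN, Finset.mul_sum, Nat.card_eq_fintype_card, ← Finset.card_univ, ← nsmul_eq_mul,
      ← Finset.sum_const, ← Finset.sum_sub_distrib, ← Finset.sum_add_distrib]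
    exact Finset.sum_congr rfl fun T _ => by ring
  rw [this, h', h1, mul_add, mul_sub, inv_mul_cancel_left₀ hN0, En_eq hn, ← p1, ← p2]
  ring

lemma tendsto_Vn_div : Tendsto (fun n : ℕ => Vn n / n) atTop
    (𝓝 (Real.exp (-1) - 2 * Real.exp (-1) ^ 2)) := by
  refine tendsto_var_aux.congr' ?_
  filter_upwards [eventually_ge_atTop 3] with n hn
  have hn' : (n : ℝ) ≠ 0 := by exact_mod_cast (by omega : n ≠ 0)
  rw [Vn_eq hn, mul_div_cancel_left₀ _ hn']

lemma tendsto_sqrt_ratio : Tendsto (fun n : ℕ => √n / √(Vn n)) atTop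
    (𝓝 (√(Real.exp (-1) - 2 * Real.exp (-1) ^ 2))⁻¹) := by
  have h := ((Real.continuous_sqrt.tendsto _).comp tendsto_Vn_div).inv₀ (Real.sqrt_pos.2 var_pos).ne'
  refine h.congr fun n => ?_
  simp only [Function.comp_apply]
  rw [Real.sqrt_div' _ (by positivity), inv_div]

lemma tendsto_charFun_leaves (t : ℝ) :
    Tendsto (fun n : ℕ => charFun ((treeUniform n).map
      (fun T => ((leafCount T.val : ℝ) - En n) / √(Vn n))) t) atTop
      (𝓝 (charFun (ProbabilityTheory.gaussianReal 0 1) t)) := by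
  set σ2 := Real.exp (-1) - 2 * Real.exp (-1) ^ 2 with hσ
  -- `√n * (1 - 1/n)^(n-2) - √n / e` is the shift `(E_n - n / e) / √n`, and `ρ n = √n / √V_n`
  -- the change of scale; the latter is absorbed into the argument `s n` of `tendsto_char`
  let ρ : ℕ → ℝ := fun n => √n / √(Vn n)
  have hρ : Tendsto ρ atTop (𝓝 (√σ2)⁻¹) := tendsto_sqrt_ratio
  have h1 := tendsto_char (hρ.const_mul t)
  have hd : Tendsto (fun n : ℕ => (√n * ((1 - 1 / (n : ℝ)) ^ (n - 2) - Real.exp (-1))) * (t * ρ n))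
      atTop (𝓝 0) := by
    simpa using tendsto_mean_aux.mul (hρ.const_mul t)
  have hc : Continuous fun r : ℝ => exp (-(I * r)) := by fun_prop
  have h2 := ((hc.tendsto 0).comp hd).mul h1
  have hval : exp (-(I * (0 : ℝ))) *
      exp (-(((t * (√σ2)⁻¹ : ℝ) : ℂ) ^ 2 * (exp (-1) - 2 * exp (-1) ^ 2) / 2)) =
      charFun (ProbabilityTheory.gaussianReal 0 1) t := by
    rw [ProbabilityTheory.charFun_gaussianReal]
    have e : (exp (-1) - 2 * exp (-1) ^ 2 : ℂ) = (σ2 : ℝ) := by rw [hσ]; push_cast; ring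
    have e' : (t * (√σ2)⁻¹) ^ 2 * σ2 = t ^ 2 := by
      rw [mul_pow, inv_pow, Real.sq_sqrt var_pos.le, mul_assoc, inv_mul_cancel₀ var_pos.ne', mul_one]
    rw [e, ← ofReal_pow, ← ofReal_mul, e']
    simp
  rw [hval] at h2
  refine h2.congr' ?_
  filter_upwards [eventually_ge_atTop 3] with n hn
  have hn' : (0 : ℝ) < n := by exact_mod_cast (by omega : 0 < n)
  have h0 : √(n : ℝ) ≠ 0 := (Real.sqrt_pos.2 hn').ne'
  rw [charFun_apply_real, integral_map (measurable_of_countable _).aemeasurable (by fun_prop),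
    integral_treeUniform, Function.comp_apply, mul_div_assoc', Finset.mul_sum, real_smul,
    div_eq_inv_mul]
  push_cast
  congr 1
  refine Finset.sum_congr rfl fun T _ => ?_
  rw [← exp_add]
  congr 1
  rw [En_eq hn]
  have key : ((leafCount T.1 : ℝ) - n * (1 - 1 / (n : ℝ)) ^ (n - 2)) / √(Vn n) =
      -(√n * ((1 - 1 / (n : ℝ)) ^ (n - 2) - Real.exp (-1)) * ρ n) +
        ρ n * (leafCount T.1 - n * Real.exp (-1)) * (√n)⁻¹ := by
    have h3 : √(n : ℝ) * √n = n := Real.mul_self_sqrt hn'.le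
    have h4 : √(n : ℝ) * (√n)⁻¹ = 1 := mul_inv_cancel₀ h0
    simp only [ρ, div_eq_mul_inv (√(n : ℝ)), div_eq_mul_inv _ (√(Vn n))]
    linear_combination (((1 - 1 / (n : ℝ)) ^ (n - 2) - Real.exp (-1)) * (√(Vn n))⁻¹) * h3 -
      ((leafCount T.1 - n * Real.exp (-1)) * (√(Vn n))⁻¹) * h4
  have keyC := congrArg Complex.ofReal key
  push_cast at keyC ⊢
  rw [keyC]
  ring

end LeavesCLT

/-- Central limit theorem for the number of leaves: the law of
`T ↦ (ℓ(T) − E_n)/√V_n` under the uniform measure on labeled trees on `[n]` converges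
weakly to the standard Gaussian `N(0,1)` as `n → ∞` (weak convergence being tested
against bounded continuous functions). -/
theorem leaves_clt :
    ∀ f : BoundedContinuousFunction ℝ ℝ,
      Filter.Tendsto
        (fun n : ℕ => ∫ x, f x ∂((treeUniform n).map
          (fun T => ((leafCount T.val : ℝ) - En n) / Real.sqrt (Vn n))))
        Filter.atTop
        (nhds (∫ x, f x ∂(ProbabilityTheory.gaussianReal 0 1))) := by
  intro f
  -- the measures are probability measures only from `n = 1` on, so shift the index
  rw [← Filter.tendsto_add_atTop_iff_nat 1]
  have hprob : ∀ n : ℕ, IsProbabilityMeasure ((treeUniform (n + 1)).map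
      (fun T => ((leafCount T.val : ℝ) - En (n + 1)) / Real.sqrt (Vn (n + 1)))) := fun n =>
    have := LeavesCLT.isProbabilityMeasure_treeUniform (n := n + 1) (by omega)
    Measure.isProbabilityMeasure_map (measurable_of_countable _).aemeasurable
  let μ : ℕ → ProbabilityMeasure ℝ := fun n => ⟨_, hprob n⟩
  let μ₀ : ProbabilityMeasure ℝ := ⟨ProbabilityTheory.gaussianReal 0 1, inferInstance⟩
  have h : Filter.Tendsto μ Filter.atTop (nhds μ₀) :=
    ProbabilityMeasure.tendsto_iff_tendsto_charFun.2 fun t =>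
      (Filter.tendsto_add_atTop_iff_nat 1).2 (LeavesCLT.tendsto_charFun_leaves t)
  exact ProbabilityMeasure.tendsto_iff_forall_integral_tendsto.1 h f
end

section
/- Let G be a finite group acting on a finite nonempty set X, and let K be the Burnside kernel. Then K is a strictly positive stochastic matrix: for all x, y ∈ X one has K(x,y) > 0, and for every x ∈ X one has Σ_{y ∈ X} K(x,y) = 1. -/
/-!
Both claims follow from writing `burnsideK G X x y` as a sum over `g` in the whole group, with
summand `1 / #X_g` when `g` fixes both `x` and `y` and `0` otherwise. The identity fixes every
point, so the sum is positive. For the row sums, exchange the two summations: a given `g ∈ G_x`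
contributes `1 / #X_g` once for each `y ∈ X_g`, hence `1` in total (`X_g` contains `x`, so it is
nonempty), and the outer sum counts the elements of `G_x`.
-/

/-- The Burnside kernel: `K(x,y) = (1/#G_x) · Σ_{g ∈ G_x ∩ G_y} 1/#X_g`, where `G_x`
is the stabilizer of `x` and `X_g` the fixed-point set of `g`. -/
noncomputable def burnsideK (G X : Type*) [Group G] [Fintype G] [Fintype X]
    [MulAction G X] (x y : X) : ℝ :=
  (Nat.card (MulAction.stabilizer G x) : ℝ)⁻¹ *
    ∑ᶠ g ∈ {g : G | g • x = x ∧ g • y = y}, (Nat.card {z : X // g • z = z} : ℝ)⁻¹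

open Classical in
lemma burnsideK_eq_sum (G X : Type*) [Group G] [Fintype G] [Fintype X]
    [MulAction G X] (x y : X) :
    burnsideK G X x y = (Nat.card (MulAction.stabilizer G x) : ℝ)⁻¹ *
      ∑ g : G, if g • x = x ∧ g • y = y then (Nat.card {z : X // g • z = z} : ℝ)⁻¹ else 0 := by
  unfold burnsideK
  congr 1
  rw [finsum_eq_sum_of_fintype]
  refine Finset.sum_congr rfl fun g _ => ?_
  rw [finsum_eq_if]
  rfl

/-- The Burnside kernel is a strictly positive stochastic matrix. -/
theorem burnsideK_pos_stochastic (G X : Type*) [Group G] [Fintype G] [Fintype X]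
    [Nonempty X] [MulAction G X] :
    (∀ x y : X, 0 < burnsideK G X x y) ∧
    (∀ x : X, ∑ y : X, burnsideK G X x y = 1) := by
  classical
  constructor
  · intro x y
    rw [burnsideK_eq_sum]
    refine mul_pos (inv_pos.mpr (Nat.cast_pos.mpr Nat.card_pos)) ?_
    refine Finset.sum_pos' (fun g _ => ?_) ⟨1, Finset.mem_univ _, ?_⟩
    · split_ifs <;> positivity
    · have : Nonempty {z : X // (1 : G) • z = z} := ⟨⟨x, one_smul G x⟩⟩
      rw [if_pos ⟨one_smul G x, one_smul G y⟩]
      exact inv_pos.mpr (Nat.cast_pos.mpr Nat.card_pos)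
  · intro x
    simp_rw [burnsideK_eq_sum]
    rw [← Finset.mul_sum, Finset.sum_comm]
    have key : ∀ g : G, (∑ y : X, if g • x = x ∧ g • y = y then
        (Nat.card {z : X // g • z = z} : ℝ)⁻¹ else 0) = if g • x = x then 1 else 0 := by
      intro g
      by_cases hg : g • x = x
      · have : Nonempty {z : X // g • z = z} := ⟨⟨x, hg⟩⟩
        have hne : (Nat.card {z : X // g • z = z} : ℝ) ≠ 0 :=
          Nat.cast_ne_zero.mpr Nat.card_pos.ne'
        simp only [hg, true_and, if_true]
        rw [← Finset.sum_filter, Finset.sum_const, nsmul_eq_mul, ← Fintype.card_subtype,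
          ← Nat.card_eq_fintype_card, mul_inv_cancel₀ hne]
      · simp [hg]
    have hcard : (∑ g : G, if g • x = x then (1 : ℝ) else 0) =
        Nat.card (MulAction.stabilizer G x) := by
      rw [Finset.sum_boole, ← Fintype.card_subtype, ← Nat.card_eq_fintype_card]
      rfl
    rw [Finset.sum_congr rfl fun g _ => key g, hcard]
    exact inv_mul_cancel₀ (Nat.cast_ne_zero.mpr Nat.card_pos.ne')
end

section
/- Let G be a finite group acting on a finite nonempty set X, and let K be the Burnside kernel. Then the Burnside process projects to a well-defined symmetric Markov chain on orbits: (1) for any x, x' in the same G-orbit and any G-orbit O', Σ_{y ∈ O'} K(x,y) = Σ_{y ∈ O'} K(x',y); and (2) writing K̄(O,O') for this common value when x ranges over the orbit O, one has K̄(O,O') = K̄(O',O) for all G-orbits O, O'. -/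
/-- The unnormalized Burnside kernel `W(x,y) = Σ_{g ∈ G_x ∩ G_y} 1/#X_g`. -/
noncomputable def burnsideW (G X : Type*) [Group G] [MulAction G X] (x y : X) : ℝ :=
  ∑ᶠ g ∈ {g : G | g • x = x ∧ g • y = y}, (Nat.card {z : X // g • z = z} : ℝ)⁻¹

theorem burnsideW_symm (G X : Type*) [Group G] [MulAction G X] (x y : X) :
    burnsideW G X x y = burnsideW G X y x := by
  unfold burnsideW
  congr! 4
  simp only [and_comm]

theorem conj_smul_smul_eq_iff {G X : Type*} [Group G] [MulAction G X] (h g : G) (x : X) :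
    (h * g * h⁻¹) • h • x = h • x ↔ g • x = x := by
  simp [mul_smul]

theorem card_fixed_conj {G X : Type*} [Group G] [MulAction G X] (h g : G) :
    Nat.card {z : X // (h * g * h⁻¹) • z = z} = Nat.card {z : X // g • z = z} :=
  (Nat.card_congr ((MulAction.toPerm h).subtypeEquiv
    fun z => (conj_smul_smul_eq_iff h g z).symm)).symm

theorem burnsideW_smul_smul {G X : Type*} [Group G] [MulAction G X] (h : G) (x y : X) :
    burnsideW G X (h • x) (h • y) = burnsideW G X x y := by
  unfold burnsideW
  rw [← finsum_comp_equiv (MulAut.conj h).toEquiv]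
  simp [mul_smul, ← card_fixed_conj h]

theorem card_stabilizer_smul {G X : Type*} [Group G] [MulAction G X] (h : G) (x : X) :
    Nat.card (MulAction.stabilizer G (h • x)) = Nat.card (MulAction.stabilizer G x) :=
  (Nat.card_congr ((MulAut.conj h).toEquiv.subtypeEquiv
    fun g => (conj_smul_smul_eq_iff h g x).symm)).symm

theorem burnsideK_eq (G X : Type*) [Group G] [Fintype G] [Fintype X] [MulAction G X] (x y : X) :
    burnsideK G X x y =
      (Nat.card (MulAction.stabilizer G x) : ℝ)⁻¹ * burnsideW G X x y := rfl

theorem burnsideK_smul_smul {G X : Type*} [Group G] [Fintype G] [Fintype X] [MulAction G X]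
    (h : G) (x y : X) : burnsideK G X (h • x) (h • y) = burnsideK G X x y := by
  rw [burnsideK_eq, burnsideK_eq, burnsideW_smul_smul, card_stabilizer_smul]

/-- The elements moving `z` to `k • z` form a left coset of the stabilizer of `z`. -/
theorem card_transporter {G X : Type*} [Group G] [MulAction G X] (z : X) (k : G) :
    Nat.card {h : G // h • z = k • z} = Nat.card (MulAction.stabilizer G z) :=
  (Nat.card_congr ((Equiv.mulLeft k).subtypeEquiv fun h => by
    simp [mul_smul])).symm

/-- Orbit-stabilizer in weighted form. -/
theorem sum_smul_eq_card_mul_finsum_orbit {G X : Type*} [Group G] [Fintype G] [Fintype X]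
    [MulAction G X] (z : X) (f : X → ℝ) :
    ∑ h : G, f (h • z) =
      (Nat.card (MulAction.stabilizer G z) : ℝ) * ∑ᶠ y ∈ MulAction.orbit G z, f y := by
  classical
  rw [finsum_mem_def, finsum_eq_sum_of_fintype, Finset.mul_sum,
    ← Finset.sum_fiberwise Finset.univ (fun h : G => h • z)]
  refine Finset.sum_congr rfl fun y _ => ?_
  rw [Finset.sum_congr rfl (g := fun _ => f y)
    (fun h hh => by rw [(Finset.mem_filter.mp hh).2]), Finset.sum_const, nsmul_eq_mul]
  by_cases hy : y ∈ MulAction.orbit G z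
  · obtain ⟨k, rfl⟩ := hy
    rw [Set.indicator_of_mem (MulAction.mem_orbit z k), ← card_transporter z k,
      Nat.card_eq_fintype_card, Fintype.card_subtype]
  · rw [Set.indicator_of_notMem hy, Finset.filter_false_of_mem]
    · simp
    · rintro h - rfl
      exact hy (MulAction.mem_orbit z h)

theorem finsum_orbit_eq {G X : Type*} [Group G] [Fintype G] [Fintype X]
    [MulAction G X] (z : X) (f : X → ℝ) :
    ∑ᶠ y ∈ MulAction.orbit G z, f y =
      (Nat.card (MulAction.stabilizer G z) : ℝ)⁻¹ * ∑ h : G, f (h • z) := by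
  have : (Nat.card (MulAction.stabilizer G z) : ℝ) ≠ 0 := by
    exact_mod_cast Nat.card_pos.ne'
  rw [sum_smul_eq_card_mul_finsum_orbit, inv_mul_cancel_left₀ this]

/-- The Burnside process projects to a well-defined symmetric Markov chain on orbits:
(1) for `x, x'` in the same orbit, the total kernel mass from `x` and from `x'` into
any orbit `O' = orbit G z` coincide; (2) the induced kernel on orbits is symmetric:
the common mass from the orbit of `x` into the orbit of `z` equals the mass from the
orbit of `z` into the orbit of `x`. -/
theorem burnside_orbit_chain (G X : Type*) [Group G] [Fintype G] [Fintype X]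
    [Nonempty X] [MulAction G X] :
    (∀ x x' : X, (∃ g : G, g • x = x') → ∀ z : X,
      (∑ᶠ y ∈ MulAction.orbit G z, burnsideK G X x y) =
        ∑ᶠ y ∈ MulAction.orbit G z, burnsideK G X x' y) ∧
    (∀ x z : X,
      (∑ᶠ y ∈ MulAction.orbit G z, burnsideK G X x y) =
        ∑ᶠ y ∈ MulAction.orbit G x, burnsideK G X z y) := by
  refine ⟨?_, fun x z => ?_⟩
  · rintro x _ ⟨g, rfl⟩ z
    rw [finsum_orbit_eq, finsum_orbit_eq, ← Equiv.sum_comp (Equiv.mulLeft g)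
      (fun h => burnsideK G X (g • x) (h • z))]
    simp only [Equiv.coe_mulLeft, mul_smul, burnsideK_smul_smul]
  · have key : ∑ h : G, burnsideW G X x (h • z) = ∑ h : G, burnsideW G X z (h • x) := by
      rw [← Equiv.sum_comp (Equiv.inv G) (fun h => burnsideW G X z (h • x))]
      refine Finset.sum_congr rfl fun h _ => ?_
      rw [burnsideW_symm G X z, ← burnsideW_smul_smul h⁻¹ x, inv_smul_smul, Equiv.inv_apply]
    rw [finsum_orbit_eq, finsum_orbit_eq]
    simp only [burnsideK_eq, ← Finset.mul_sum]
    rw [key, mul_left_comm]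
end

section
/- Let σ be a permutation of [n], and for d ≥ 1 let λ_d be the number of cycles of σ of length d (fixed points counting as 1-cycles). Then the number of functions f : [n] → [n] (not necessarily bijective) satisfying f ∘ σ = σ ∘ f equals ∏_{d=1}^{n} (Σ_{e | d} e·λ_e)^{λ_d}. -/
/-!
A map `f` commuting with `σ` is determined by its values on one representative `r` of each cycle,
since `f (σ^k r) = σ^k (f r)`. If the cycle of `r` has length `d`, then `f r` may be any `y` with
`σ^d y = y`, and every such choice extends to a commuting map (`commutingEquiv`).
The number of these `y` is `∑_{e ∣ d} #{i | i has period e} = ∑_{e ∣ d} e * λ_e`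
(`card_periodic`), and the count is the product of this number over all cycles, which is regrouped
by cycle length.
-/

/-- The number of cycles of length `d` of a permutation of `Fin n`
(fixed points count as cycles of length 1). -/
noncomputable def cycleCount {n : ℕ} (σ : Equiv.Perm (Fin n)) (d : ℕ) : ℕ :=
  (Finset.univ.filter fun i : Fin n => Function.minimalPeriod (⇑σ) i = d).card / d

namespace CommutingMaps

open Function

variable {n : ℕ} (σ : Equiv.Perm (Fin n))

/-- The set of cycles of `σ`, fixed points included. -/
abbrev Cycles : Type := Quotient (Equiv.Perm.SameCycle.setoid σ)

/-- The length of a cycle, read off as the minimal period of a chosen representative. -/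
noncomputable def len (q : Cycles σ) : ℕ := minimalPeriod σ q.out

lemma exists_iterate_out (x : Fin n) :
    ∃ k : ℕ, σ^[k] (Quotient.out (⟦x⟧ : Cycles σ)) = x := by
  have h : σ.SameCycle (Quotient.out (⟦x⟧ : Cycles σ)) x :=
    Quotient.mk_out (s := Equiv.Perm.SameCycle.setoid σ) x
  obtain ⟨k, hk⟩ := h.exists_nat_pow_eq
  exact ⟨k, by rw [← Equiv.Perm.coe_pow]; exact hk⟩

lemma mk_iterate (k : ℕ) (x : Fin n) : (⟦σ^[k] x⟧ : Cycles σ) = ⟦x⟧ := by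
  refine Quotient.sound (s := Equiv.Perm.SameCycle.setoid σ) ?_
  change σ.SameCycle _ _
  rw [← Equiv.Perm.coe_pow]
  exact Equiv.Perm.sameCycle_pow_left.2 (Equiv.Perm.SameCycle.refl σ x)

lemma mk_apply (x : Fin n) : (⟦σ x⟧ : Cycles σ) = ⟦x⟧ := mk_iterate σ 1 x

lemma minimalPeriod_pos (x : Fin n) : 0 < minimalPeriod σ x := by
  refine IsPeriodicPt.minimalPeriod_pos (orderOf_pos σ) ?_
  change σ^[orderOf σ] x = x
  rw [← Equiv.Perm.coe_pow, pow_orderOf_eq_one]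
  rfl

lemma minimalPeriod_eq_len (x : Fin n) : minimalPeriod σ x = len σ ⟦x⟧ := by
  obtain ⟨k, hk⟩ := exists_iterate_out σ x
  conv_lhs => rw [← hk]
  exact minimalPeriod_apply_iterate
    (minimalPeriod_pos_iff_mem_periodicPts.1 (minimalPeriod_pos σ _)) k

open Classical in
lemma card_fiber (q : Cycles σ) :
    (Finset.univ.filter fun x : Fin n => (⟦x⟧ : Cycles σ) = q).card = len σ q := by
  have h : (Finset.univ.filter fun x : Fin n => (⟦x⟧ : Cycles σ) = q) =
      (Finset.range (len σ q)).image fun k => σ^[k] q.out := by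
    ext x
    simp only [Finset.mem_filter, Finset.mem_univ, true_and, Finset.mem_image, Finset.mem_range]
    constructor
    · rintro rfl
      obtain ⟨k, hk⟩ := exists_iterate_out σ x
      exact ⟨k % len σ ⟦x⟧, Nat.mod_lt _ (minimalPeriod_pos σ _),
        (iterate_mod_minimalPeriod_eq).trans hk⟩
    · rintro ⟨k, -, rfl⟩
      rw [mk_iterate, Quotient.out_eq]
  rw [h, Finset.card_image_of_injOn, Finset.card_range]
  intro a ha b hb hab
  exact iterate_injOn_Iio_minimalPeriod (by simpa [len] using ha) (by simpa [len] using hb) hab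

open Classical in
lemma card_minimalPeriod (d : ℕ) :
    (Finset.univ.filter fun i : Fin n => minimalPeriod σ i = d).card =
      d * (Finset.univ.filter fun q : Cycles σ => len σ q = d).card := by
  rw [Finset.card_eq_sum_card_fiberwise (f := fun x => (⟦x⟧ : Cycles σ))
    (t := Finset.univ.filter fun q : Cycles σ => len σ q = d)]
  · rw [Finset.sum_congr rfl (g := fun _ => d), Finset.sum_const, smul_eq_mul, mul_comm]
    intro q hq
    have hq' : len σ q = d := by simpa using hq
    rw [Finset.filter_filter]
    conv_rhs => rw [← hq', ← card_fiber σ q]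
    congr 1
    ext x
    simp only [Finset.mem_filter, Finset.mem_univ, true_and, and_iff_right_iff_imp]
    rintro rfl
    rw [minimalPeriod_eq_len, hq']
  · intro x hx
    simpa [minimalPeriod_eq_len] using hx

open Classical in
lemma cycleCount_eq {d : ℕ} (hd : 0 < d) :
    cycleCount σ d = (Finset.univ.filter fun q : Cycles σ => len σ q = d).card := by
  rw [cycleCount, card_minimalPeriod, Nat.mul_div_cancel_left _ hd]

lemma card_periodic {d : ℕ} (hd : 0 < d) :
    Nat.card {y : Fin n // IsPeriodicPt σ d y} = ∑ e ∈ d.divisors, e * cycleCount σ e := by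
  classical
  rw [Nat.card_eq_fintype_card, Fintype.card_subtype,
    Finset.card_eq_sum_card_fiberwise (f := fun x => minimalPeriod σ x) (t := d.divisors)]
  · refine Finset.sum_congr rfl fun e he => ?_
    rw [cycleCount_eq σ (Nat.pos_of_mem_divisors he), ← card_minimalPeriod, Finset.filter_filter]
    congr 1
    ext x
    simp only [Finset.mem_filter, Finset.mem_univ, true_and, and_iff_right_iff_imp]
    rintro rfl
    exact isPeriodicPt_iff_minimalPeriod_dvd.2 (Nat.dvd_of_mem_divisors he)
  · intro x hx
    have hx' : IsPeriodicPt σ d x := by simpa using hx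
    simpa [hd.ne'] using hx'.minimalPeriod_dvd

/-- If the minimal period of `r` is a period of `y`, then `σ^k r ↦ σ^k y` is well defined. -/
lemma iterate_congr {r y : Fin n} (hy : IsPeriodicPt σ (minimalPeriod σ r) y) {a b : ℕ}
    (h : σ^[a] r = σ^[b] r) : σ^[a] y = σ^[b] y := by
  have hr : a ≡ b [MOD minimalPeriod σ r] := by
    refine iterate_injOn_Iio_minimalPeriod (f := σ) (x := r)
      (Nat.mod_lt _ (minimalPeriod_pos σ r)) (Nat.mod_lt _ (minimalPeriod_pos σ r)) ?_
    simpa [iterate_mod_minimalPeriod_eq] using h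
  rw [← hy.iterate_mod_apply a, ← hy.iterate_mod_apply b, hr]

/-- An exponent taking the chosen representative of the cycle of `x` to `x`. -/
noncomputable def expo (x : Fin n) : ℕ := (exists_iterate_out σ x).choose

lemma expo_spec (x : Fin n) : σ^[expo σ x] (Quotient.out (⟦x⟧ : Cycles σ)) = x :=
  (exists_iterate_out σ x).choose_spec

/-- A map commuting with `σ` amounts to a choice, for each cycle of length `d`, of a point
fixed by `σ^d`: the image of the representative of the cycle. -/
noncomputable def commutingEquiv :
    {f : Fin n → Fin n // f ∘ ⇑σ = ⇑σ ∘ f} ≃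
      ((q : Cycles σ) → {y : Fin n // IsPeriodicPt σ (len σ q) y}) where
  toFun f q := ⟨f.1 q.out,
    (isPeriodicPt_minimalPeriod σ q.out).map (semiconj_iff_comp_eq.2 f.2)⟩
  invFun g := ⟨fun x => σ^[expo σ x] (g ⟦x⟧).1, by
    funext x
    simp only [comp_apply]
    rw [mk_apply, ← iterate_succ_apply' σ]
    refine iterate_congr σ (g ⟦x⟧).2 ?_
    have h := expo_spec σ (σ x)
    rw [mk_apply] at h
    rw [h, iterate_succ_apply', expo_spec]⟩
  left_inv f := by
    ext1
    funext x
    have h : Semiconj f.1 σ σ := semiconj_iff_comp_eq.2 f.2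
    change σ^[expo σ x] (f.1 _) = f.1 x
    rw [← (h.iterate_right _).eq, expo_spec]
  right_inv g := by
    funext q
    ext1
    change σ^[expo σ q.out] (g ⟦q.out⟧).1 = (g q).1
    have h := expo_spec σ q.out
    rw [Quotient.out_eq] at h ⊢
    exact iterate_congr σ (b := 0) (g q).2 h

lemma len_mem (q : Cycles σ) : len σ q ∈ Finset.Icc 1 n := by
  classical
  refine Finset.mem_Icc.2 ⟨minimalPeriod_pos σ _, ?_⟩
  rw [← card_fiber]
  exact (Finset.card_le_univ _).trans_eq (Fintype.card_fin n)

end CommutingMaps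

open CommutingMaps in
/-- The number of self-maps of `[n]` commuting with a permutation `σ` equals
`∏_{d=1}^{n} (Σ_{e ∣ d} e·λ_e)^{λ_d}`. -/
theorem commuting_maps_count (n : ℕ) (σ : Equiv.Perm (Fin n)) :
    Nat.card {f : Fin n → Fin n // f ∘ ⇑σ = ⇑σ ∘ f} =
      ∏ d ∈ Finset.Icc 1 n,
        (∑ e ∈ d.divisors, e * cycleCount σ e) ^ cycleCount σ d := by
  classical
  rw [Nat.card_congr (commutingEquiv σ), Nat.card_pi,
    ← Finset.prod_fiberwise_of_maps_to (g := len σ) (t := Finset.Icc 1 n)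
      (fun q _ => len_mem σ q)]
  refine Finset.prod_congr rfl fun d hd => ?_
  have hd' : 0 < d := (Finset.mem_Icc.1 hd).1
  rw [cycleCount_eq σ hd', ← card_periodic σ hd']
  refine Finset.prod_eq_pow_card fun q hq => ?_
  rw [(Finset.mem_filter.1 hq).2]
end
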